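/- arXiv:2206.05780 — 8 statements merged into one kernel-verified Lean document; each statement's English description precedes it below -/
import Mathlib

section
/- The odd chromatic number of the cycle on 5 vertices equals 5; that is, C_5 admits an odd 5-coloring but admits no odd coloring with fewer than 5 colors. -/
/-!
An odd coloring of `C₅` is the same thing as an injective one. Two distinct vertices of `C₅` are
either adjacent, so a proper coloring separates them, or they form the whole neighborhood of a
common neighbor `v`; were they equally colored, every color would appear `0` or `2` times around
`v`. This is `injective_of_isOddColoring_C5`, and by pigeonhole it forces at least five colors.
Conversely, under an injective coloring the color of any neighbor of `v` appears exactly once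
around `v`.
-/

/-- The set of colors that appear an odd number of times among the neighbors of `v`
under the (not necessarily proper) coloring `c`. -/
def oddColorSet {V α : Type*} (G : SimpleGraph V) (c : V → α) (v : V) : Set α :=
  {a | Odd {w | w ∈ G.neighborSet v ∧ c w = a}.ncard}

/-- A coloring is proper if adjacent vertices receive distinct colors. -/
def IsProperColoring {V α : Type*} (G : SimpleGraph V) (c : V → α) : Prop :=
  ∀ ⦃x y : V⦄, G.Adj x y → c x ≠ c y

/-- A proper coloring is odd if every non-isolated vertex has some color appearing
an odd number of times in its neighborhood. -/
def IsOddColoring {V α : Type*} (G : SimpleGraph V) (c : V → α) : Prop :=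
  IsProperColoring G c ∧
    ∀ v : V, (G.neighborSet v).Nonempty → (oddColorSet G c v).Nonempty

/-- `G` has an odd coloring with at most `n` colors. -/
def HasOddNColoring {V : Type*} (G : SimpleGraph V) (n : ℕ) : Prop :=
  ∃ c : V → Fin n, IsOddColoring G c

/-- The odd chromatic number of `G`. -/
noncomputable def oddChromaticNumber {V : Type*} (G : SimpleGraph V) : ℕ :=
  sInf {n | HasOddNColoring G n}

/-- Non-adjacent distinct vertices of `C₅` have a common neighbor, and `C₅` is `2`-regular. -/
lemma adj_or_neighborSet_eq_pair_C5 (x y : Fin 5) (hxy : x ≠ y) :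
    (SimpleGraph.cycleGraph 5).Adj x y ∨
      ∃ v, ∀ w, (SimpleGraph.cycleGraph 5).Adj v w ↔ w = x ∨ w = y := by
  revert x y
  decide

lemma injective_of_isOddColoring_C5 {α : Type*} {c : Fin 5 → α}
    (hc : IsOddColoring (SimpleGraph.cycleGraph 5) c) : Function.Injective c := by
  intro x y hcxy
  by_contra hxy
  obtain hadj | ⟨v, hv⟩ := adj_or_neighborSet_eq_pair_C5 x y hxy
  · exact hc.1 hadj hcxy
  · obtain ⟨a, ha⟩ := hc.2 v ⟨x, (hv x).2 (Or.inl rfl)⟩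
    change Odd (Set.ncard {w | (SimpleGraph.cycleGraph 5).Adj v w ∧ c w = a}) at ha
    by_cases hxa : c x = a
    · have hset : {w | (SimpleGraph.cycleGraph 5).Adj v w ∧ c w = a} = {x, y} := by
        ext w
        simp only [Set.mem_ofPred_eq, hv, Set.mem_insert_iff, Set.mem_singleton_iff]
        grind
      rw [hset, Set.ncard_pair hxy] at ha
      exact absurd ha (by decide)
    · have hset : {w | (SimpleGraph.cycleGraph 5).Adj v w ∧ c w = a} = ∅ := by
        ext w
        simp only [Set.mem_ofPred_eq, hv, Set.mem_empty_iff_false]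
        grind
      rw [hset, Set.ncard_empty] at ha
      exact absurd ha (by decide)

lemma isOddColoring_of_injective {V α : Type*} (G : SimpleGraph V) {c : V → α}
    (hc : Function.Injective c) : IsOddColoring G c := by
  refine ⟨fun x y hadj h => hadj.ne (hc h), fun v ⟨u, hu⟩ => ⟨c u, ?_⟩⟩
  have hset : {w | w ∈ G.neighborSet v ∧ c w = c u} = {u} := by
    ext w
    simp only [Set.mem_ofPred_eq, Set.mem_singleton_iff]
    exact ⟨fun h => hc h.2, by rintro rfl; exact ⟨hu, rfl⟩⟩
  change Odd (Set.ncard {w | w ∈ G.neighborSet v ∧ c w = c u})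
  rw [hset, Set.ncard_singleton]
  exact odd_one

theorem odd_chromatic_number_C5 :
    oddChromaticNumber (SimpleGraph.cycleGraph 5) = 5 ∧
    HasOddNColoring (SimpleGraph.cycleGraph 5) 5 ∧
    ∀ k : ℕ, k < 5 → ¬ HasOddNColoring (SimpleGraph.cycleGraph 5) k := by
  have hex : HasOddNColoring (SimpleGraph.cycleGraph 5) 5 :=
    ⟨id, isOddColoring_of_injective _ Function.injective_id⟩
  have hlow : ∀ k : ℕ, k < 5 → ¬ HasOddNColoring (SimpleGraph.cycleGraph 5) k := by
    rintro k hk ⟨c, hc⟩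
    have hcard := Fintype.card_le_of_injective c (injective_of_isOddColoring_C5 hc)
    simp only [Fintype.card_fin] at hcard
    omega
  refine ⟨le_antisymm (Nat.sInf_le hex) ?_, hex, hlow⟩
  exact le_csInf ⟨5, hex⟩ fun k hk => not_lt.1 fun hlt => hlow k hlt hk
end

section
/- Let G be a finite simple graph and let v be a vertex of G with exactly four distinct neighbors v_1, v_2, v_3, v_4. Let G' be the graph obtained from G − v (the graph G with v deleted) by adding three new vertices x_1, x_2, x_3 and the six edges v_1x_1, x_1v_2, v_2x_2, x_2v_3, v_3x_3, x_3v_1. If G' admits an odd 9-coloring, then G admits an odd 9-coloring. -/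
/-- The graph obtained from `G − v` by adding three new vertices `x₁, x₂, x₃`
(the `Fin 3` part) and the six edges `v₁x₁, x₁v₂, v₂x₂, x₂v₃, v₃x₃, x₃v₁`. -/
def delAddTriangleGraph {V : Type*} (G : SimpleGraph V) (v v1 v2 v3 : V) :
    SimpleGraph ((({v}ᶜ : Set V)) ⊕ Fin 3) :=
  SimpleGraph.fromRel (fun a b =>
    match a, b with
    | Sum.inl x, Sum.inl y => G.Adj x y
    | Sum.inl x, Sum.inr i =>
        (i = 0 ∧ ((x : V) = v1 ∨ (x : V) = v2)) ∨
        (i = 1 ∧ ((x : V) = v2 ∨ (x : V) = v3)) ∨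
        (i = 2 ∧ ((x : V) = v3 ∨ (x : V) = v1))
    | _, _ => False)

/-- If `u` has exactly two neighbors and satisfies the oddness condition, its neighbors differ in
color: otherwise every color would appear zero or two times around `u`. -/
theorem ne_of_neighborSet_eq_pair {W α : Type*} {H : SimpleGraph W} {c : W → α}
    (hc : IsOddColoring H c) {u p q : W} (hpq : p ≠ q) (hu : H.neighborSet u = {p, q}) :
    c p ≠ c q := by
  intro h
  obtain ⟨b, hb⟩ := hc.2 u (by rw [hu]; exact ⟨p, by simp⟩)
  simp only [oddColorSet, hu, Set.mem_ofPred_eq] at hb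
  by_cases hpb : c p = b
  · have : {w | w ∈ ({p, q} : Set W) ∧ c w = b} = {p, q} := by
      ext w
      simp only [Set.mem_ofPred_eq, Set.mem_insert_iff, Set.mem_singleton_iff]
      constructor
      · exact fun h => h.1
      · rintro (rfl | rfl)
        · exact ⟨Or.inl rfl, hpb⟩
        · exact ⟨Or.inr rfl, h ▸ hpb⟩
    rw [this, Set.ncard_pair hpq] at hb
    exact absurd hb (by decide)
  · have : {w | w ∈ ({p, q} : Set W) ∧ c w = b} = ∅ := by
      ext w
      simp only [Set.mem_ofPred_eq, Set.mem_insert_iff, Set.mem_singleton_iff,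
        Set.mem_empty_iff_false, iff_false]
      rintro ⟨rfl | rfl, hw⟩
      · exact hpb hw
      · exact hpb (h.trans hw)
    rw [this, Set.ncard_empty] at hb
    exact absurd hb (by decide)

open Classical in
/-- Recoloring a neighbor `v` of `u` destroys the oddness condition at `u` for at most one choice
of the new color. Indeed, if some color `b` is odd around `u` with `v` ignored, then `b` stays odd
unless `v` gets color `b`; if there is no such `b`, then the color given to `v` becomes odd. -/
theorem exists_forbidden_color {V α : Type*} [Finite V] (G : SimpleGraph V) (e : V → α)
    {u v : V} (huv : G.Adj u v) :
    ∃ f : α, ∀ a, a ≠ f → (oddColorSet G (Function.update e v a) u).Nonempty := by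
  by_cases h : ∃ b, Odd {w | G.Adj u w ∧ w ≠ v ∧ e w = b}.ncard
  · obtain ⟨b, hb⟩ := h
    refine ⟨b, fun a hab => ⟨b, ?_⟩⟩
    have : {w | w ∈ G.neighborSet u ∧ Function.update e v a w = b}
        = {w | G.Adj u w ∧ w ≠ v ∧ e w = b} := by
      ext w
      by_cases hw : w = v
      · subst hw
        simp [hab]
      · simp [hw]
    simpa only [oddColorSet, Set.mem_ofPred_eq, this] using hb
  · push Not at h
    refine ⟨e v, fun a _ => ⟨a, ?_⟩⟩
    have : {w | w ∈ G.neighborSet u ∧ Function.update e v a w = a}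
        = insert v {w | G.Adj u w ∧ w ≠ v ∧ e w = a} := by
      ext w
      by_cases hw : w = v
      · subst hw
        simp [huv]
      · simp [hw]
    simp only [oddColorSet, Set.mem_ofPred_eq, this]
    rw [Set.ncard_insert_of_notMem (by simp) (Set.toFinite _)]
    exact (Nat.not_odd_iff_even.1 (h a)).add_one

theorem degree_four_reduction {V : Type*} [Fintype V] (G : SimpleGraph V)
    (v v1 v2 v3 v4 : V) (hdist : [v1, v2, v3, v4].Pairwise (· ≠ ·))
    (hN : G.neighborSet v = {v1, v2, v3, v4})
    (h9 : HasOddNColoring (delAddTriangleGraph G v v1 v2 v3) 9) :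
    HasOddNColoring G 9 := by
  classical
  obtain ⟨c, hc⟩ := h9
  simp only [List.pairwise_cons, List.mem_cons, List.not_mem_nil, or_false, forall_eq_or_imp,
    forall_eq, IsEmpty.forall_iff, implies_true, List.Pairwise.nil, and_true] at hdist
  obtain ⟨⟨h12, h13, h14⟩, ⟨h23, h24⟩, h34⟩ := hdist
  have hadj : ∀ w, G.Adj v w ↔ w = v1 ∨ w = v2 ∨ w = v3 ∨ w = v4 := by
    intro w
    rw [← SimpleGraph.mem_neighborSet, hN]
    simp
  have a1 : G.Adj v v1 := (hadj _).2 (by simp)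
  have a2 : G.Adj v v2 := (hadj _).2 (by simp)
  have a3 : G.Adj v v3 := (hadj _).2 (by simp)
  have a4 : G.Adj v v4 := (hadj _).2 (by simp)
  let e : V → Fin 9 := fun w => if h : w = v then 0 else c (Sum.inl ⟨w, h⟩)
  have he : ∀ w (h : w ≠ v), e w = c (Sum.inl ⟨w, h⟩) := fun w h => by simp [e, h]
  have e12 : e v1 ≠ e v2 := by
    rw [he v1 a1.ne', he v2 a2.ne']
    refine ne_of_neighborSet_eq_pair hc (u := Sum.inr 0) (by simpa [Subtype.ext_iff] using h12) ?_
    ext (w | w) <;> simp [delAddTriangleGraph, Subtype.ext_iff]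
  have e23 : e v2 ≠ e v3 := by
    rw [he v2 a2.ne', he v3 a3.ne']
    refine ne_of_neighborSet_eq_pair hc (u := Sum.inr 1) (by simpa [Subtype.ext_iff] using h23) ?_
    ext (w | w) <;> simp [delAddTriangleGraph, Subtype.ext_iff]
  have e31 : e v3 ≠ e v1 := by
    rw [he v3 a3.ne', he v1 a1.ne']
    refine ne_of_neighborSet_eq_pair hc (u := Sum.inr 2) (by simpa [Subtype.ext_iff] using h13.symm) ?_
    ext (w | w) <;> simp [delAddTriangleGraph, Subtype.ext_iff]
  obtain ⟨f1, hf1⟩ := exists_forbidden_color G e a1.symm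
  obtain ⟨f2, hf2⟩ := exists_forbidden_color G e a2.symm
  obtain ⟨f3, hf3⟩ := exists_forbidden_color G e a3.symm
  obtain ⟨f4, hf4⟩ := exists_forbidden_color G e a4.symm
  obtain ⟨a, ha⟩ : ∃ a : Fin 9, a ∉ ([e v1, e v2, e v3, e v4, f1, f2, f3, f4].toFinset) := by
    by_contra! hall
    have h1 := Finset.card_le_card (fun x _ => hall x : (Finset.univ : Finset (Fin 9)) ⊆ _)
    have h2 := List.toFinset_card_le [e v1, e v2, e v3, e v4, f1, f2, f3, f4]
    simp only [Finset.card_univ, Fintype.card_fin, List.length_cons, List.length_nil] at h1 h2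
    omega
  simp only [List.mem_toFinset, List.mem_cons, List.not_mem_nil, or_false, not_or] at ha
  obtain ⟨b1, b2, b3, b4, g1, g2, g3, g4⟩ := ha
  have hav : ∀ w, G.Adj v w → a ≠ e w := by
    intro w hw
    rcases (hadj w).1 hw with rfl | rfl | rfl | rfl <;> assumption
  refine ⟨Function.update e v a, ?_, ?_⟩
  · intro x y hxy
    by_cases hx : x = v
    · subst hx
      simpa [hxy.ne'] using hav y hxy
    · by_cases hy : y = v
      · subst hy
        simpa [hx] using (hav x hxy.symm).symm
      · rw [Function.update_of_ne hx, Function.update_of_ne hy, he x hx, he y hy]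
        refine hc.1 ?_
        simp [delAddTriangleGraph, Subtype.ext_iff, hxy, hxy.ne]
  · intro w hw
    by_cases hwv : w = v
    · subst hwv
      -- A color worn by exactly one neighbor of `w` appears once, hence an odd number of times.
      have key : ∀ u, G.Adj w u → (∀ y, G.Adj w y → y ≠ u → e y ≠ e u) →
          (oddColorSet G (Function.update e w a) w).Nonempty := by
        intro u hu huniq
        refine ⟨e u, ?_⟩
        have : {y | y ∈ G.neighborSet w ∧ Function.update e w a y = e u} = {u} := by
          ext y
          simp only [Set.mem_ofPred_eq, SimpleGraph.mem_neighborSet, Set.mem_singleton_iff]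
          constructor
          · rintro ⟨hy, hey⟩
            rw [Function.update_of_ne hy.ne'] at hey
            by_contra hne
            exact huniq y hy hne hey
          · rintro rfl
            exact ⟨hu, Function.update_of_ne hu.ne' _ _⟩
        simp only [oddColorSet, Set.mem_ofPred_eq, this, Set.ncard_singleton, odd_one]
      by_cases h41 : e v4 = e v1
      · refine key v2 a2 fun y hy hne => ?_
        rcases (hadj y).1 hy with rfl | rfl | rfl | rfl
        · exact e12
        · exact absurd rfl hne
        · exact e23.symm
        · exact h41 ▸ e12
      · refine key v1 a1 fun y hy hne => ?_
        rcases (hadj y).1 hy with rfl | rfl | rfl | rfl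
        · exact absurd rfl hne
        · exact e12.symm
        · exact e31
        · exact h41
    · by_cases hwa : G.Adj v w
      · rcases (hadj w).1 hwa with rfl | rfl | rfl | rfl
        · exact hf1 a g1
        · exact hf2 a g2
        · exact hf3 a g3
        · exact hf4 a g4
      · have hn := mt (hadj w).2 hwa
        simp only [not_or] at hn
        obtain ⟨n1, n2, n3, n4⟩ := hn
        have hne : ∀ y, G.Adj w y → y ≠ v := by
          rintro y hy rfl
          exact hwa hy.symm
        have hA : ∀ y : ({v}ᶜ : Set V), (delAddTriangleGraph G v v1 v2 v3).Adj
            (Sum.inl ⟨w, hwv⟩) (Sum.inl y) ↔ G.Adj w y := by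
          intro y
          simp only [delAddTriangleGraph, SimpleGraph.fromRel_adj, ne_eq, Sum.inl.injEq,
            Subtype.ext_iff]
          constructor
          · rintro ⟨_, h | h⟩
            · exact h
            · exact h.symm
          · exact fun h => ⟨h.ne, Or.inl h⟩
        have hB : ∀ i, ¬ (delAddTriangleGraph G v v1 v2 v3).Adj
            (Sum.inl ⟨w, hwv⟩) (Sum.inr i) := by
          intro i
          simp [delAddTriangleGraph, n1, n2, n3]
        obtain ⟨y, hy⟩ := hw
        obtain ⟨b, hb⟩ := hc.2 (Sum.inl ⟨w, hwv⟩) ⟨Sum.inl ⟨y, hne y hy⟩, (hA _).2 hy⟩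
        refine ⟨b, ?_⟩
        -- Both color classes around `w` are injective images of the same subset of `G − v`.
        let T : Set ({v}ᶜ : Set V) := {y | G.Adj w y ∧ c (Sum.inl y) = b}
        have t1 : {z | z ∈ (delAddTriangleGraph G v v1 v2 v3).neighborSet (Sum.inl ⟨w, hwv⟩)
            ∧ c z = b} = Sum.inl '' T := by
          ext (z | z)
          · simp [T, hA]
          · simp [hB]
        have t2 : {z | z ∈ G.neighborSet w ∧ Function.update e v a z = b}
            = Subtype.val '' T := by
          ext z
          simp only [Set.mem_ofPred_eq, SimpleGraph.mem_neighborSet, Set.mem_image, T]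
          constructor
          · rintro ⟨hz, hzb⟩
            rw [Function.update_of_ne (hne z hz), he z (hne z hz)] at hzb
            exact ⟨⟨z, hne z hz⟩, ⟨hz, hzb⟩, rfl⟩
          · rintro ⟨⟨z, hzv⟩, ⟨hz, hzb⟩, rfl⟩
            exact ⟨hz, by rw [Function.update_of_ne hzv, he z hzv, hzb]⟩
        simp only [oddColorSet, Set.mem_ofPred_eq, t1, t2,
          Set.ncard_image_of_injective _ Sum.inl_injective,
          Set.ncard_image_of_injective _ Subtype.val_injective] at hb ⊢
        exact hb
end

section
/- Let G be a finite simple graph and let u and v be adjacent vertices of G, both of odd degree. Let G' be the graph obtained from G by subdividing the edge uv with one new vertex w (that is, delete the edge uv, add a new vertex w, and add the edges uw and wv). If G' admits an odd 9-coloring, then G admits an odd 9-coloring. -/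
/-- The graph obtained from `G` by subdividing the edge `uv` with one new vertex `w`
(the `Unit` part): delete the edge `uv`, add `w`, and add the edges `uw` and `wv`. -/
def subdivideEdgeGraph {V : Type*} (G : SimpleGraph V) (u v : V) :
    SimpleGraph (V ⊕ Unit) :=
  SimpleGraph.fromRel (fun a b =>
    match a, b with
    | Sum.inl x, Sum.inl y => G.Adj x y ∧ ¬(x = u ∧ y = v) ∧ ¬(x = v ∧ y = u)
    | Sum.inl x, Sum.inr _ => x = u ∨ x = v
    | _, _ => False)

/-- The color multiplicities around `x` sum to its degree, so they cannot all be even when the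
degree is odd. -/
lemma oddColorSet_nonempty_of_odd_degree {V α : Type*} [Fintype V] [Fintype α]
    (G : SimpleGraph V) (c : V → α) (x : V) (hx : Odd (G.neighborSet x).ncard) :
    (oddColorSet G c x).Nonempty := by
  classical
  by_contra hne
  have heven : ∀ a, Even {w | w ∈ G.neighborSet x ∧ c w = a}.ncard := fun a =>
    Nat.not_odd_iff_even.mp fun ha => hne ⟨a, ha⟩
  have hsum : (G.neighborSet x).ncard = ∑ a, {w | w ∈ G.neighborSet x ∧ c w = a}.ncard := by
    rw [Set.ncard_eq_toFinset_card',
      Finset.card_eq_sum_card_fiberwise (f := c) (t := Finset.univ) (by simp [Set.MapsTo])]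
    refine Finset.sum_congr rfl fun a _ => ?_
    rw [Set.ncard_eq_toFinset_card']
    congr 1
    ext w
    simp
  rw [hsum] at hx
  exact Nat.not_even_iff_odd.mpr hx (Finset.even_sum _ fun a _ => heven a)

lemma subdivideEdgeGraph_adj_inl_inl {V : Type*} (G : SimpleGraph V) (u v x y : V) :
    (subdivideEdgeGraph G u v).Adj (Sum.inl x) (Sum.inl y) ↔
      G.Adj x y ∧ ¬(x = u ∧ y = v) ∧ ¬(x = v ∧ y = u) := by
  have hne : G.Adj x y → x ≠ y := fun h => h.ne
  have hsymm := G.adj_comm x y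
  simp only [subdivideEdgeGraph, SimpleGraph.fromRel_adj, ne_eq, Sum.inl.injEq]
  tauto

lemma subdivideEdgeGraph_adj_inl_inr {V : Type*} (G : SimpleGraph V) (u v x : V) (t : Unit) :
    (subdivideEdgeGraph G u v).Adj (Sum.inl x) (Sum.inr t) ↔ x = u ∨ x = v := by
  simp [subdivideEdgeGraph, SimpleGraph.fromRel_adj]

lemma subdivideEdgeGraph_neighborSet_inr {V : Type*} (G : SimpleGraph V) (u v : V) (t : Unit) :
    (subdivideEdgeGraph G u v).neighborSet (Sum.inr t) = {Sum.inl u, Sum.inl v} := by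
  ext (x | s)
  · rw [SimpleGraph.mem_neighborSet, SimpleGraph.adj_comm, subdivideEdgeGraph_adj_inl_inr]
    simp
  · simp [subdivideEdgeGraph]

/-- Away from the ends of the subdivided edge, neighborhoods do not change. -/
lemma subdivideEdgeGraph_neighborSet_inl {V : Type*} (G : SimpleGraph V) {u v x : V}
    (hxu : x ≠ u) (hxv : x ≠ v) :
    (subdivideEdgeGraph G u v).neighborSet (Sum.inl x) = Sum.inl '' G.neighborSet x := by
  ext (y | s)
  · simp [SimpleGraph.mem_neighborSet, subdivideEdgeGraph_adj_inl_inl, hxu, hxv]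
  · simp [SimpleGraph.mem_neighborSet, subdivideEdgeGraph_adj_inl_inr, hxu, hxv]

/-- The new vertex has degree two, so it sees an odd color only if its two neighbors differ. -/
lemma color_ends_ne {V α : Type*} (G : SimpleGraph V) {u v : V} (huv : u ≠ v)
    {c : V ⊕ Unit → α} (hc : IsOddColoring (subdivideEdgeGraph G u v) c) :
    c (Sum.inl u) ≠ c (Sum.inl v) := by
  intro heq
  have hN := subdivideEdgeGraph_neighborSet_inr G u v ()
  obtain ⟨a, ha⟩ := hc.2 (Sum.inr ()) (by rw [hN]; exact ⟨_, Set.mem_insert _ _⟩)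
  simp only [oddColorSet, Set.mem_ofPred_eq, hN] at ha
  by_cases hca : c (Sum.inl u) = a
  · have hset : {w | w ∈ ({Sum.inl u, Sum.inl v} : Set (V ⊕ Unit)) ∧ c w = a}
        = {Sum.inl u, Sum.inl v} := by
      ext w
      simp only [Set.mem_ofPred_eq, Set.mem_insert_iff, Set.mem_singleton_iff]
      grind
    rw [hset, Set.ncard_pair (by simpa using huv)] at ha
    exact absurd ha (by decide)
  · have hset : {w | w ∈ ({Sum.inl u, Sum.inl v} : Set (V ⊕ Unit)) ∧ c w = a} = ∅ := by
      ext w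
      simp only [Set.mem_ofPred_eq, Set.mem_insert_iff, Set.mem_singleton_iff,
        Set.mem_empty_iff_false, iff_false]
      grind
    rw [hset, Set.ncard_empty] at ha
    exact absurd ha (by decide)

theorem odd_adjacent_odd_reduction {V : Type*} [Fintype V] (G : SimpleGraph V)
    (u v : V) (hadj : G.Adj u v)
    (hu : Odd (G.neighborSet u).ncard) (hv : Odd (G.neighborSet v).ncard)
    (h9 : HasOddNColoring (subdivideEdgeGraph G u v) 9) :
    HasOddNColoring G 9 := by
  obtain ⟨c, hc⟩ := h9
  have hne := color_ends_ne G hadj.ne hc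
  refine ⟨fun x => c (Sum.inl x), ?_, ?_⟩
  · intro x y hxy
    by_cases h1 : x = u ∧ y = v
    · rw [h1.1, h1.2]
      exact hne
    by_cases h2 : x = v ∧ y = u
    · rw [h2.1, h2.2]
      exact hne.symm
    exact hc.1 ((subdivideEdgeGraph_adj_inl_inl G u v x y).mpr ⟨hxy, h1, h2⟩)
  · intro x hx
    by_cases hxu : x = u
    · subst hxu
      exact oddColorSet_nonempty_of_odd_degree G _ _ hu
    by_cases hxv : x = v
    · subst hxv
      exact oddColorSet_nonempty_of_odd_degree G _ _ hv
    have hN := subdivideEdgeGraph_neighborSet_inl G hxu hxv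
    obtain ⟨a, ha⟩ := hc.2 (Sum.inl x) (by rw [hN]; exact hx.image _)
    refine ⟨a, ?_⟩
    simp only [oddColorSet, Set.mem_ofPred_eq, hN] at ha ⊢
    have hset : {w | w ∈ (Sum.inl '' G.neighborSet x : Set (V ⊕ Unit)) ∧ c w = a}
        = Sum.inl '' {w | w ∈ G.neighborSet x ∧ c (Sum.inl w) = a} := by
      ext w
      constructor
      · rintro ⟨⟨y, hy, rfl⟩, hw⟩
        exact ⟨y, ⟨hy, hw⟩, rfl⟩
      · rintro ⟨y, ⟨hy, hw⟩, rfl⟩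
        exact ⟨⟨y, hy, rfl⟩, hw⟩
    rwa [hset, Set.ncard_image_of_injective _ Sum.inl_injective] at ha
end

section
/- Let G be a finite simple graph containing a vertex u of degree exactly 5 with distinct neighbors u_1, u_2, u_3, u_4, u_5, where u_2 and u_3 each have degree exactly 6, the edges u_1u_2, u_2u_3, u_3u_4 are present in G, the neighborhood of u_2 is exactly {u_1, u, u_3, u_2', u_2'', u_2'''} with u_2', u_2'', u_2''' distinct vertices not in {u, u_1, u_3}, and the neighborhood of u_3 is exactly {u_2, u, u_4, u_3', u_3'', u_3'''} with u_3', u_3'', u_3''' distinct vertices not in {u, u_2, u_4}. Let G' be the graph obtained from G − {u_2, u_3} by adding, for each i ∈ {2, 3}, an edge between any two of u_i', u_i'', u_i''' that are not already adjacent in G. If G' admits an odd 9-coloring, then G admits an odd 9-coloring. -/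
/-- The graph obtained from `G − {u₂, u₃}` by adding an edge between any two of
`a, b, c` (resp. of `d, e, f`) that are not already adjacent in `G`. -/
def lemma3ReducedGraph {V : Type*} (G : SimpleGraph V) (u2 u3 a b c d e f : V) :
    SimpleGraph (({u2, u3}ᶜ : Set V)) :=
  SimpleGraph.fromRel (fun x y =>
    G.Adj x y ∨
    ((x : V) ∈ ({a, b, c} : Set V) ∧ (y : V) ∈ ({a, b, c} : Set V)) ∨
    ((x : V) ∈ ({d, e, f} : Set V) ∧ (y : V) ∈ ({d, e, f} : Set V)))

open scoped symmDiff

namespace OddColoringReduction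

/-! ### Choosing the three colors -/

/-- `A = {x}` excludes at most one `x`, so five candidates suffice against four obstructions. -/
lemma exists_last {L : Finset (Fin 9)} (hL : 5 ≤ L.card) (y z : Fin 9) (A B : Finset (Fin 9)) :
    ∃ x ∈ L, x ≠ y ∧ x ≠ z ∧ A ≠ {x} ∧ B ≠ {x} := by
  have key : ∀ A : Finset (Fin 9), ∃ p, ∀ x, A = {x} → x = p := by
    intro A
    by_cases h : ∃ p, A = {p}
    · obtain ⟨p, rfl⟩ := h
      exact ⟨p, fun x hx => (Finset.singleton_injective hx).symm⟩
    · exact ⟨0, fun x hx => (h ⟨x, hx⟩).elim⟩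
  obtain ⟨p, hp⟩ := key A
  obtain ⟨q, hq⟩ := key B
  have hc : ({y, z, p, q} : Finset (Fin 9)).card < L.card :=
    lt_of_le_of_lt Finset.card_le_four (by omega)
  obtain ⟨x, hx, hn⟩ := Finset.exists_mem_notMem_of_card_lt_card hc
  simp only [Finset.mem_insert, Finset.mem_singleton, not_or] at hn
  exact ⟨x, hx, hn.1, hn.2.1, fun h => hn.2.2.1 (hp x h), fun h => hn.2.2.2 (hq x h)⟩

lemma symmDiff_singleton_eq {A : Finset (Fin 9)} {y x : Fin 9} (h : A ∆ {y} = {x}) :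
    A = {x} ∆ {y} := by
  rw [← h, symmDiff_symmDiff_cancel_right]

/-- Four odd colors cannot all be cancelled by the colors of two further neighbors. -/
lemma symmDiff_ne_of_card {A : Finset (Fin 9)} (h : A.card = 4) (y x : Fin 9) :
    A ∆ {y} ≠ {x} := by
  intro h'
  have h1 : A ⊆ {x, y} := by
    rw [symmDiff_singleton_eq h']
    intro t
    simp only [Finset.mem_symmDiff, Finset.mem_insert, Finset.mem_singleton]
    tauto
  have := (Finset.card_le_card h1).trans Finset.card_le_two
  omega

/-- If `y` lies outside a two-element set, that set excludes no value of `x`. -/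
lemma symmDiff_ne_of_notMem {A : Finset (Fin 9)} {y x : Fin 9} (hxy : x ≠ y)
    (h : A.card = 2 → y ∉ A) : A ∆ {y} ≠ {x} := by
  intro h'
  have h1 : A = {x, y} := by
    rw [symmDiff_singleton_eq h']
    ext t
    simp only [Finset.mem_symmDiff, Finset.mem_insert, Finset.mem_singleton]
    constructor
    · tauto
    · rintro (rfl | rfl) <;> simp [hxy, hxy.symm]
  subst h1
  exact h (Finset.card_pair hxy) (by simp)

lemma exists_avoid {L A : Finset (Fin 9)} (hL : 3 ≤ L.card) :
    ∃ y ∈ L, A.card = 2 → y ∉ A := by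
  by_cases hA : A.card = 2
  · obtain ⟨y, hy, hn⟩ := Finset.exists_mem_notMem_of_card_lt_card (s := A) (t := L) (by omega)
    exact ⟨y, hy, fun _ => hn⟩
  · have : L.Nonempty := Finset.card_pos.mp (by omega)
    obtain ⟨y, hy⟩ := this
    exact ⟨y, hy, fun h => (hA h).elim⟩

lemma exists_ne {L : Finset (Fin 9)} (hL : 2 ≤ L.card) (z : Fin 9) : ∃ y ∈ L, y ≠ z := by
  obtain ⟨y, hy, hn⟩ := Finset.exists_mem_notMem_of_card_lt_card (s := {z}) (t := L)
    (by rw [Finset.card_singleton]; omega)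
  exact ⟨y, hy, by simpa using hn⟩

/-- The mixed case: the color of `u1` is repeated on `a, b, c`, while `u3` is harmless.
Here `z` is any admissible color; if it makes `u2` forbid a color for `x`, then `z ∉ L2`, and `y`
may be chosen so that `u1` forbids none. -/
lemma exists_triple_mixed {L L2 L3 Q2 Q3 : Finset (Fin 9)} (f1 f4 : Fin 9 → Finset (Fin 9))
    (hL : 5 ≤ L.card) (hQ2 : Disjoint Q2 L2) (hL2 : 3 ≤ L2.card)
    (hQ3 : Q3.card = 4) (hL3 : 2 ≤ L3.card) :
    ∃ x ∈ L, ∃ y ∈ L2, ∃ z ∈ L3, x ≠ y ∧ x ≠ z ∧ y ≠ z ∧ Q2 ∆ {z} ≠ {x} ∧ Q3 ∆ {y} ≠ {x} ∧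
      f1 z ∆ {y} ≠ {x} ∧ f4 y ∆ {z} ≠ {x} := by
  obtain ⟨z, hz⟩ : L3.Nonempty := Finset.card_pos.mp (by omega)
  by_cases hzQ : z ∈ Q2
  · obtain ⟨y, hy, hyn⟩ := exists_avoid (A := f1 z) hL2
    obtain ⟨x, hx, hxy, hxz, h1, h2⟩ := exists_last hL y z (Q2 ∆ {z}) (f4 y ∆ {z})
    refine ⟨x, hx, y, hy, z, hz, hxy, hxz, ?_, h1, symmDiff_ne_of_card hQ3 _ _,
      symmDiff_ne_of_notMem hxy hyn, h2⟩
    rintro rfl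
    exact Finset.disjoint_left.mp hQ2 hzQ hy
  · obtain ⟨y, hy, hyz⟩ := exists_ne (show 2 ≤ L2.card by omega) z
    obtain ⟨x, hx, hxy, hxz, h1, h2⟩ := exists_last hL y z (f1 z ∆ {y}) (f4 y ∆ {z})
    exact ⟨x, hx, y, hy, z, hz, hxy, hxz, hyz, symmDiff_ne_of_notMem hxz fun _ => hzQ,
      symmDiff_ne_of_card hQ3 _ _, h1, h2⟩

/-- The colors `x, y, z` of `u, u2, u3` can be chosen from their lists `L, L2, L3`. Here `Q2`
and `Q3` are the odd color sets at `u2` and `u3` before the three vertices are colored, `f1 z` is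
the one at `u1` once `u3` has color `z`, and `f4 y` the one at `u4` once `u2` has
color `y`. -/
lemma exists_triple {L L2 L3 Q2 Q3 : Finset (Fin 9)} (f1 f4 : Fin 9 → Finset (Fin 9))
    (hL : 5 ≤ L.card)
    (h2 : (Q2.card = 4 ∧ 2 ≤ L2.card) ∨ (Q2.card = 2 ∧ Disjoint Q2 L2 ∧ 3 ≤ L2.card))
    (h3 : (Q3.card = 4 ∧ 2 ≤ L3.card) ∨ (Q3.card = 2 ∧ Disjoint Q3 L3 ∧ 3 ≤ L3.card))
    (h4 : (∀ y y', f4 y = f4 y') ∨ (Q2.card = 2 → 4 ≤ L2.card)) :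
    ∃ x ∈ L, ∃ y ∈ L2, ∃ z ∈ L3, x ≠ y ∧ x ≠ z ∧ y ≠ z ∧ Q2 ∆ {z} ≠ {x} ∧ Q3 ∆ {y} ≠ {x} ∧
      f1 z ∆ {y} ≠ {x} ∧ f4 y ∆ {z} ≠ {x} := by
  rcases h2 with ⟨hQ2, hL2⟩ | ⟨hQ2, hd2, hL2⟩ <;> rcases h3 with ⟨hQ3, hL3⟩ | ⟨hQ3, hd3, hL3⟩
  · obtain ⟨z, hz⟩ : L3.Nonempty := Finset.card_pos.mp (by omega)
    obtain ⟨y, hy, hyz⟩ := exists_ne hL2 z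
    obtain ⟨x, hx, hxy, hxz, h1, h2⟩ := exists_last hL y z (f1 z ∆ {y}) (f4 y ∆ {z})
    exact ⟨x, hx, y, hy, z, hz, hxy, hxz, hyz, symmDiff_ne_of_card hQ2 _ _,
      symmDiff_ne_of_card hQ3 _ _, h1, h2⟩
  · obtain ⟨x, hx, z, hz, y, hy, hxz, hxy, hzy, h3, h2, h4, h1⟩ :=
      exists_triple_mixed f4 f1 hL hd3 hL3 hQ2 hL2
    exact ⟨x, hx, y, hy, z, hz, hxy, hxz, hzy.symm, h2, h3, h1, h4⟩
  · exact exists_triple_mixed f1 f4 hL hd2 hL2 hQ3 hL3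
  · rcases h4 with h4 | h4
    · -- `z` is chosen so that `u4` forbids nothing; then one of `u1` and `u2` is made harmless.
      obtain ⟨z, hz, hzn⟩ := exists_avoid (A := f4 0) hL3
      by_cases hzQ : z ∈ Q2
      · obtain ⟨y, hy, hyn⟩ := exists_avoid (A := f1 z) hL2
        obtain ⟨x, hx, hxy, hxz, h1, h2⟩ := exists_last hL y z (Q2 ∆ {z}) (Q3 ∆ {y})
        refine ⟨x, hx, y, hy, z, hz, hxy, hxz, ?_, h1, h2,
          symmDiff_ne_of_notMem hxy hyn, ?_⟩
        · rintro rfl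
          exact Finset.disjoint_left.mp hd2 hzQ hy
        · rw [h4 y 0]
          exact symmDiff_ne_of_notMem hxz hzn
      · obtain ⟨y, hy, hyz⟩ := exists_ne (show 2 ≤ L2.card by omega) z
        obtain ⟨x, hx, hxy, hxz, h1, h2⟩ := exists_last hL y z (f1 z ∆ {y}) (Q3 ∆ {y})
        refine ⟨x, hx, y, hy, z, hz, hxy, hxz, hyz, symmDiff_ne_of_notMem hxz fun _ => hzQ,
          h2, h1, ?_⟩
        rw [h4 y 0]
        exact symmDiff_ne_of_notMem hxz hzn
    · -- With four candidates for `y`, both `u2` and `u3` can be made harmless.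
      obtain ⟨z, hz, hzn⟩ := exists_avoid (A := Q2) hL3
      obtain ⟨y, hy, hyn⟩ := Finset.exists_mem_notMem_of_card_lt_card (s := insert z Q3) (t := L2)
        (lt_of_le_of_lt (Finset.card_insert_le _ _) (by have := h4 hQ2; omega))
      simp only [Finset.mem_insert, not_or] at hyn
      obtain ⟨x, hx, hxy, hxz, h1, h2⟩ := exists_last hL y z (f1 z ∆ {y}) (f4 y ∆ {z})
      exact ⟨x, hx, y, hy, z, hz, hxy, hxz, hyn.1, symmDiff_ne_of_notMem hxz hzn,
        symmDiff_ne_of_notMem hxy fun _ => hyn.2, h1, h2⟩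

/-! ### Odd color sets of finite vertex sets -/

/-- The colors that occur an odd number of times on the finite vertex set `s`. -/
def oddOn {V : Type*} (c : V → Fin 9) (s : Finset V) : Finset (Fin 9) :=
  Finset.univ.filter fun t => Odd (s.filter fun w => c w = t).card

lemma oddOn_empty {V : Type*} (c : V → Fin 9) : oddOn c ∅ = ∅ := by
  simp [oddOn]

lemma oddOn_insert {V : Type*} [DecidableEq V] (c : V → Fin 9) {s : Finset V} {v : V} (hv : v ∉ s) :
    oddOn c (insert v s) = oddOn c s ∆ {c v} := by
  ext t
  simp only [oddOn, Finset.mem_symmDiff, Finset.mem_filter, Finset.mem_univ, true_and,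
    Finset.mem_singleton, Finset.filter_insert]
  by_cases h : c v = t
  · rw [if_pos h, Finset.card_insert_of_notMem (by simp [hv])]
    simp [h, Nat.odd_add_one]
  · simp [h, Ne.symm h]

lemma oddOn_congr {V : Type*} {c c' : V → Fin 9} {s : Finset V} (h : ∀ w ∈ s, c w = c' w) :
    oddOn c s = oddOn c' s := by
  ext t
  simp only [oddOn, Finset.mem_filter, Finset.mem_univ, true_and]
  rw [Finset.filter_congr fun w hw => by rw [h w hw]]

lemma oddOn_nonempty_of_odd_card {V : Type*} (c : V → Fin 9) {s : Finset V} (h : Odd s.card) :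
    (oddOn c s).Nonempty := by
  by_contra hn
  rw [Finset.not_nonempty_iff_eq_empty] at hn
  apply Nat.not_even_iff_odd.mpr h
  rw [Finset.card_eq_sum_card_fiberwise (f := c) (t := Finset.univ) (by simp)]
  refine Finset.even_sum _ fun t _ => ?_
  by_contra ho
  have : t ∈ oddOn c s := by simpa [oddOn] using ho
  simp [hn] at this

lemma symmDiff_singleton_nonempty {A : Finset (Fin 9)} {x : Fin 9} (h : A ≠ {x}) :
    (A ∆ {x}).Nonempty := by
  rw [Finset.nonempty_iff_ne_empty, ← Finset.bot_eq_empty, Ne, symmDiff_eq_bot]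
  exact h

lemma oddOn_split_one {V : Type*} [DecidableEq V] (c : V → Fin 9) (s : Finset V) (v : V) :
    oddOn c s = oddOn c (s.erase v) ∆ (if v ∈ s then {c v} else ∅) := by
  split_ifs with h
  · rw [← oddOn_insert c (Finset.notMem_erase v s), Finset.insert_erase h]
  · rw [Finset.erase_eq_of_notMem h]
    exact (symmDiff_bot _).symm

/-- Given four vertices of which the last three have distinct colors, the number of odd colors is
four, or it is two and the first color is repeated. -/
lemma oddOn_four {V : Type*} [DecidableEq V] (c : V → Fin 9) {p q r s : V} (hpq : p ≠ q) (hpr : p ≠ r) (hps : p ≠ s)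
    (hqr : q ≠ r) (hqs : q ≠ s) (hrs : r ≠ s) (cqr : c q ≠ c r) (cqs : c q ≠ c s)
    (crs : c r ≠ c s) :
    oddOn c {p, q, r, s} ⊆ {c p, c q, c r, c s} ∧
    ((oddOn c {p, q, r, s}).card = 4 ∨
      ((oddOn c {p, q, r, s}).card = 2 ∧
        ({c p, c q, c r, c s} : Finset (Fin 9)).card ≤ 3)) := by
  have h : oddOn c {p, q, r, s} = ((({c s} : Finset (Fin 9)) ∆ {c r}) ∆ {c q}) ∆ {c p} := by
    rw [oddOn_insert c (by simp [hpq, hpr, hps]), oddOn_insert c (by simp [hqr, hqs]),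
      oddOn_insert c (by simp [hrs]), ← insert_empty_eq s, oddOn_insert c (by simp), oddOn_empty]
    rw [← Finset.bot_eq_empty, bot_symmDiff]
  rw [h]
  generalize c p = cp at *
  generalize c q = cq at *
  generalize c r = cr at *
  generalize c s = cs at *
  constructor
  · intro t
    simp only [Finset.mem_symmDiff, Finset.mem_insert, Finset.mem_singleton]
    tauto
  have h3 : ((({cs} : Finset (Fin 9)) ∆ {cr}) ∆ {cq}) = {cq, cr, cs} := by
    ext t
    simp only [Finset.mem_symmDiff, Finset.mem_insert, Finset.mem_singleton]
    grind
  have hc3 : ({cq, cr, cs} : Finset (Fin 9)).card = 3 := by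
    rw [Finset.card_eq_three]; exact ⟨_, _, _, cqr, cqs, crs, rfl⟩
  rw [h3]
  by_cases hp : cp ∈ ({cq, cr, cs} : Finset (Fin 9))
  · right
    rw [Finset.insert_eq_of_mem hp]
    refine ⟨?_, hc3.le⟩
    have : ({cq, cr, cs} : Finset (Fin 9)) ∆ {cp} = ({cq, cr, cs} : Finset (Fin 9)).erase cp := by
      ext t
      simp only [Finset.mem_symmDiff, Finset.mem_singleton, Finset.mem_erase]
      grind
    rw [this, Finset.card_erase_of_mem hp, hc3]
  · left
    have : ({cq, cr, cs} : Finset (Fin 9)) ∆ {cp} = insert cp ({cq, cr, cs} : Finset (Fin 9)) := by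
      ext t
      rw [Finset.mem_symmDiff, Finset.mem_insert, Finset.mem_singleton]
      grind
    rw [this, Finset.card_insert_of_notMem hp, hc3]

/-- Bounds on the list of colors left for `u2` or `u3`: `C` holds the colors of its four
neighbors outside `{u, u2, u3}`, `Q` the odd ones among them, and `X w`, for `w ∈ s`, is the odd
color protected at the neighbor `w`. -/
lemma list_card {V : Type*} {Q C : Finset (Fin 9)} (X : V → Fin 9) {s : Finset V} (hC : C.card ≤ 4)
    (hs : s.card ≤ 3) (hQ : Q ⊆ C) (h : Q.card = 4 ∨ (Q.card = 2 ∧ C.card ≤ 3)) :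
    (Q.card = 4 ∧ 2 ≤ (Finset.univ \ (C ∪ s.image X)).card) ∨
    (Q.card = 2 ∧ Disjoint Q (Finset.univ \ (C ∪ s.image X)) ∧
      3 ≤ (Finset.univ \ (C ∪ s.image X)).card ∧
      (s.card ≤ 2 → 4 ≤ (Finset.univ \ (C ∪ s.image X)).card)) := by
  have h1 : (Finset.univ \ (C ∪ s.image X)).card = 9 - (C ∪ s.image X).card := by
    rw [Finset.card_sdiff_of_subset (Finset.subset_univ _)]; simp
  have h2 := Finset.card_union_le C (s.image X)
  have h3 : (s.image X).card ≤ s.card := Finset.card_image_le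
  rcases h with h | ⟨h, h'⟩
  · left
    omega
  · right
    refine ⟨h, ?_, by omega, by omega⟩
    rw [Finset.disjoint_left]
    intro t ht
    simp [hQ ht]

lemma oddColorSet_eq {V : Type*} (G : SimpleGraph V) (c : V → Fin 9) (v : V)
    (s : Finset V) (hs : G.neighborSet v = s) : oddColorSet G c v = oddOn c s := by
  ext t
  have : {w | w ∈ G.neighborSet v ∧ c w = t} = ((s.filter fun w => c w = t : Finset V) : Set V) := by
    ext w; simp [hs]
  simp only [oddColorSet, oddOn, Set.mem_ofPred_eq, this, Set.ncard_coe_finset, Finset.mem_coe,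
    Finset.mem_filter, Finset.mem_univ, true_and]

/-- An odd color `X` avoided by the new neighbors stays odd; if no color was odd before, the
distinct colors of the new neighbors are odd. The propositions `p`, `q`, `r` say which of the
vertices colored `x`, `y`, `z` are neighbors. -/
lemma protected_nonempty {O : Finset (Fin 9)} {X x y z : Fin 9} {p q r : Prop} [Decidable p]
    [Decidable q] [Decidable r] (hX : O.Nonempty → X ∈ O) (hpqr : p ∨ q ∨ r)
    (hxy : x ≠ y) (hxz : x ≠ z) (hyz : y ≠ z)
    (hx : p → x ≠ X) (hy : q → y ≠ X) (hz : r → z ≠ X) :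
    (((O ∆ (if r then {z} else ∅)) ∆ (if q then {y} else ∅)) ∆ (if p then {x} else ∅)).Nonempty := by
  rcases O.eq_empty_or_nonempty with rfl | hO
  · rcases hpqr with h | h | h
    · refine ⟨x, ?_⟩
      simp only [Finset.mem_symmDiff]
      split_ifs <;> simp_all
    · refine ⟨y, ?_⟩
      simp only [Finset.mem_symmDiff]
      split_ifs <;> simp_all [Ne.symm]
    · refine ⟨z, ?_⟩
      simp only [Finset.mem_symmDiff]
      split_ifs <;> simp_all [Ne.symm]
  · refine ⟨X, ?_⟩
    have := hX hO
    simp only [Finset.mem_symmDiff]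
    split_ifs <;> simp_all [eq_comm]

end OddColoringReduction

open OddColoringReduction

/-! ### Extending the coloring -/

set_option maxHeartbeats 1000000 in
theorem lemma3_reduction {V : Type*} [Fintype V] (G : SimpleGraph V)
    (u u1 u2 u3 u4 u5 a b c d e f : V)
    (hdistu : [u, u1, u2, u3, u4, u5].Pairwise (· ≠ ·))
    (hdistabc : [a, b, c].Pairwise (· ≠ ·))
    (habc : ∀ x ∈ ({a, b, c} : Set V), x ∉ ({u, u1, u3} : Set V))
    (hdistdef : [d, e, f].Pairwise (· ≠ ·))
    (hdef : ∀ x ∈ ({d, e, f} : Set V), x ∉ ({u, u2, u4} : Set V))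
    (hNu : G.neighborSet u = {u1, u2, u3, u4, u5})
    (hNu2 : G.neighborSet u2 = {u1, u, u3, a, b, c})
    (hNu3 : G.neighborSet u3 = {u2, u, u4, d, e, f})
    (hdegu2 : (G.neighborSet u2).ncard = 6)
    (hdegu3 : (G.neighborSet u3).ncard = 6)
    (h12 : G.Adj u1 u2) (h23 : G.Adj u2 u3) (h34 : G.Adj u3 u4)
    (h9 : HasOddNColoring (lemma3ReducedGraph G u2 u3 a b c d e f) 9) :
    HasOddNColoring G 9 := by
  classical
  obtain ⟨c', hproper, hodd⟩ := h9
  simp only [List.pairwise_cons, List.mem_cons, List.not_mem_nil, or_false, forall_eq_or_imp,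
    forall_eq, false_imp_iff, implies_true, List.Pairwise.nil, and_true,
    Set.mem_insert_iff, Set.mem_singleton_iff, not_or] at hdistu hdistabc hdistdef habc hdef
  have adju : ∀ w, G.Adj u w ↔ w = u1 ∨ w = u2 ∨ w = u3 ∨ w = u4 ∨ w = u5 := fun w => by
    rw [← SimpleGraph.mem_neighborSet, hNu]; simp
  have adju2 : ∀ w, G.Adj u2 w ↔ w = u1 ∨ w = u ∨ w = u3 ∨ w = a ∨ w = b ∨ w = c := fun w => by
    rw [← SimpleGraph.mem_neighborSet, hNu2]; simp
  have adju3 : ∀ w, G.Adj u3 w ↔ w = u2 ∨ w = u ∨ w = u4 ∨ w = d ∨ w = e ∨ w = f := fun w => by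
    rw [← SimpleGraph.mem_neighborSet, hNu3]; simp
  obtain ⟨⟨hu_1, hu_2, hu_3, hu_4, hu_5⟩, ⟨h1_2, h1_3, h1_4, h1_5⟩, ⟨h2_3, h2_4, h2_5⟩,
    ⟨h3_4, h3_5⟩, h4_5⟩ := hdistu
  obtain ⟨⟨hab, hac⟩, hbc⟩ := hdistabc
  obtain ⟨⟨hde, hdf⟩, hef⟩ := hdistdef
  obtain ⟨⟨hau, hau1, hau3⟩, ⟨hbu, hbu1, hbu3⟩, ⟨hcu, hcu1, hcu3⟩⟩ := habc
  obtain ⟨⟨hdu, hdu2, hdu4⟩, ⟨heu, heu2, heu4⟩, ⟨hfu, hfu2, hfu4⟩⟩ := hdef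
  have hau2 : a ≠ u2 := ((adju2 a).2 (by simp)).ne'
  have hbu2 : b ≠ u2 := ((adju2 b).2 (by simp)).ne'
  have hcu2 : c ≠ u2 := ((adju2 c).2 (by simp)).ne'
  have hdu3 : d ≠ u3 := ((adju3 d).2 (by simp)).ne'
  have heu3 : e ≠ u3 := ((adju3 e).2 (by simp)).ne'
  have hfu3 : f ≠ u3 := ((adju3 f).2 (by simp)).ne.symm
  -- `g` extends the given coloring by an irrelevant value at `u2` and `u3`.
  obtain ⟨g, hg⟩ : ∃ g : V → Fin 9, ∀ w (h : w ∈ ({u2, u3}ᶜ : Set V)), g w = c' ⟨w, h⟩ :=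
    ⟨fun w => if h : w ∈ ({u2, u3}ᶜ : Set V) then c' ⟨w, h⟩ else 0, fun w h => dif_pos h⟩
  have hmem : ∀ w, w ≠ u2 → w ≠ u3 → w ∈ ({u2, u3}ᶜ : Set V) := fun w h h' => by simp [h, h']
  have hgne : ∀ v w, v ≠ u2 → v ≠ u3 → w ≠ u2 → w ≠ u3 → v ≠ w →
      (G.Adj v w ∨ (v ∈ ({a, b, c} : Set V) ∧ w ∈ ({a, b, c} : Set V)) ∨
        (v ∈ ({d, e, f} : Set V) ∧ w ∈ ({d, e, f} : Set V))) → g v ≠ g w := by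
    intro v w hv2 hv3 hw2 hw3 hvw h
    rw [hg v (hmem v hv2 hv3), hg w (hmem w hw2 hw3)]
    refine hproper ?_
    rw [lemma3ReducedGraph, SimpleGraph.fromRel_adj]
    exact ⟨fun h' => hvw (congrArg Subtype.val h'), Or.inl h⟩
  have gab : g a ≠ g b := hgne a b hau2 hau3 hbu2 hbu3 hab (by simp)
  have gac : g a ≠ g c := hgne a c hau2 hau3 hcu2 hcu3 hac (by simp)
  have gbc : g b ≠ g c := hgne b c hbu2 hbu3 hcu2 hcu3 hbc (by simp)
  have gde : g d ≠ g e := hgne d e hdu2 hdu3 heu2 heu3 hde (by simp)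
  have gdf : g d ≠ g f := hgne d f hdu2 hdu3 hfu2 hfu3 hdf (by simp)
  have gef : g e ≠ g f := hgne e f heu2 heu3 hfu2 hfu3 hef (by simp)
  set O : V → Finset (Fin 9) := fun w =>
    oddOn g ((((G.neighborFinset w).erase u).erase u2).erase u3) with hO
  have hX : ∀ w, ∃ t, (O w).Nonempty → t ∈ O w := fun w => by
    by_cases h : (O w).Nonempty
    · exact ⟨h.choose, fun _ => h.choose_spec⟩
    · exact ⟨0, fun h' => (h h').elim⟩
  choose X hX using hX
  have hO2 : O u2 = oddOn g {u1, a, b, c} := by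
    simp only [hO]; congr 1; ext w
    simp only [Finset.mem_erase, SimpleGraph.mem_neighborFinset, adju2, Finset.mem_insert,
      Finset.mem_singleton]
    grind
  have hO3 : O u3 = oddOn g {u4, d, e, f} := by
    simp only [hO]; congr 1; ext w
    simp only [Finset.mem_erase, SimpleGraph.mem_neighborFinset, adju3, Finset.mem_insert,
      Finset.mem_singleton]
    grind
  have habc4 : u4 ∈ ({a, b, c} : Finset V) → (({a, b, c} : Finset V).erase u4).card ≤ 2 :=
    fun h => by
      have h3 : ({a, b, c} : Finset V).card ≤ 3 := Finset.card_le_three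
      rw [Finset.card_erase_of_mem h]
      omega
  obtain ⟨hsub2, hcase2⟩ := oddOn_four g (Ne.symm hau1) (Ne.symm hbu1) (Ne.symm hcu1)
    hab hac hbc gab gac gbc
  obtain ⟨hsub3, hcase3⟩ := oddOn_four g (Ne.symm hdu4) (Ne.symm heu4) (Ne.symm hfu4)
    hde hdf hef gde gdf gef
  rw [← hO2] at hsub2 hcase2
  rw [← hO3] at hsub3 hcase3
  have hl2 := list_card X (s := ({a, b, c} : Finset V).erase u4) Finset.card_le_four
    ((Finset.card_erase_le).trans Finset.card_le_three) hsub2 hcase2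
  have hl3 := list_card X (s := ({d, e, f} : Finset V)) Finset.card_le_four
    Finset.card_le_three hsub3 hcase3
  have hl : 5 ≤ (Finset.univ \ ({g u1, g u4, g u5, X u5} : Finset (Fin 9))).card := by
    have h4 : ({g u1, g u4, g u5, X u5} : Finset (Fin 9)).card ≤ 4 := Finset.card_le_four
    rw [Finset.card_sdiff_of_subset (Finset.subset_univ _)]
    simp only [Finset.card_univ, Fintype.card_fin]
    omega
  obtain ⟨x, hx, y, hy, z, hz, hxy, hxz, hyz, hU2, hU3, hU1, hU4⟩ :=
    exists_triple (fun z => O u1 ∆ (if G.Adj u1 u3 then {z} else ∅))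
      (fun y => O u4 ∆ (if G.Adj u4 u2 then {y} else ∅)) hl
      (hl2.imp id fun h => ⟨h.1, h.2.1, h.2.2.1⟩) (hl3.imp id fun h => ⟨h.1, h.2.1, h.2.2.1⟩) (by
        by_cases h42 : G.Adj u4 u2
        · right
          intro hcard
          rcases hl2 with h | h
          · omega
          · refine h.2.2.2 (habc4 ?_)
            have := (adju2 u4).1 h42.symm
            simp only [Finset.mem_insert, Finset.mem_singleton]
            grind
        · left
          intro y y'
          simp only [h42, if_false])
  simp only [Finset.mem_sdiff, Finset.mem_univ, true_and, Finset.mem_union, Finset.mem_insert,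
    Finset.mem_singleton, Finset.mem_image, Finset.mem_erase, not_or, not_exists, not_and]
    at hx hy hz
  obtain ⟨hy1, hy2⟩ := hy
  obtain ⟨hz1, hz2⟩ := hz
  obtain ⟨C, hCu, hCu2, hCu3, hC⟩ : ∃ C : V → Fin 9, C u = x ∧ C u2 = y ∧ C u3 = z ∧
      ∀ w, w ≠ u → w ≠ u2 → w ≠ u3 → C w = g w :=
    ⟨fun w => if w = u then x else if w = u2 then y else if w = u3 then z else g w,
      by simp, by simp [hu_2.symm], by simp [hu_3.symm, h2_3.symm],
      fun w h h' h'' => by simp [h, h', h'']⟩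
  have hsplit : ∀ w, oddOn C (G.neighborFinset w) =
      ((O w ∆ (if G.Adj w u3 then {z} else ∅)) ∆ (if G.Adj w u2 then {y} else ∅)) ∆
        (if G.Adj w u then {x} else ∅) := by
    intro w
    rw [oddOn_split_one C _ u, oddOn_split_one C _ u2, oddOn_split_one C _ u3]
    rw [oddOn_congr (c := C) (c' := g)]
    · simp only [hO, hCu, hCu2, hCu3, Finset.mem_erase, SimpleGraph.mem_neighborFinset,
        h2_3.symm, hu_2.symm, hu_3.symm, ne_eq, not_false_eq_true, true_and]
    · intro v hv
      simp only [Finset.mem_erase] at hv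
      exact hC v hv.2.2.1 hv.2.1 hv.1
  have hset : ∀ w, oddColorSet G C w = oddOn C (G.neighborFinset w) := fun w =>
    oddColorSet_eq G C w _ (by simp)
  have hpu : ∀ w, G.Adj u w → x ≠ C w := by
    intro w hw
    rcases (adju w).1 hw with rfl | rfl | rfl | rfl | rfl
    · rw [hC _ hu_1.symm h1_2 h1_3]; exact hx.1
    · rwa [hCu2]
    · rwa [hCu3]
    · rw [hC _ hu_4.symm h2_4.symm h3_4.symm]; exact hx.2.1
    · rw [hC _ hu_5.symm h2_5.symm h3_5.symm]; exact hx.2.2.1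
  have hpu2 : ∀ w, G.Adj u2 w → y ≠ C w := by
    intro w hw
    rcases (adju2 w).1 hw with rfl | rfl | rfl | rfl | rfl | rfl
    · rw [hC _ hu_1.symm h1_2 h1_3]; exact hy1.1
    · rw [hCu]; exact hxy.symm
    · rwa [hCu3]
    · rw [hC _ hau hau2 hau3]; exact hy1.2.1
    · rw [hC _ hbu hbu2 hbu3]; exact hy1.2.2.1
    · rw [hC _ hcu hcu2 hcu3]; exact hy1.2.2.2
  have hpu3 : ∀ w, G.Adj u3 w → z ≠ C w := by
    intro w hw
    rcases (adju3 w).1 hw with rfl | rfl | rfl | rfl | rfl | rfl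
    · rw [hCu2]; exact hyz.symm
    · rw [hCu]; exact hxz.symm
    · rw [hC _ hu_4.symm h2_4.symm h3_4.symm]; exact hz1.1
    · rw [hC _ hdu hdu2 hdu3]; exact hz1.2.1
    · rw [hC _ heu heu2 heu3]; exact hz1.2.2.1
    · rw [hC _ hfu hfu2 hfu3]; exact hz1.2.2.2
  refine ⟨C, ?_, ?_⟩
  · intro v w hvw
    by_cases hvu : v = u
    · subst hvu; rw [hCu]; exact hpu w hvw
    by_cases hv2 : v = u2
    · subst hv2; rw [hCu2]; exact hpu2 w hvw
    by_cases hv3 : v = u3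
    · subst hv3; rw [hCu3]; exact hpu3 w hvw
    by_cases hwu : w = u
    · subst hwu; rw [hCu]; exact (hpu v hvw.symm).symm
    by_cases hw2 : w = u2
    · subst hw2; rw [hCu2]; exact (hpu2 v hvw.symm).symm
    by_cases hw3 : w = u3
    · subst hw3; rw [hCu3]; exact (hpu3 v hvw.symm).symm
    rw [hC v hvu hv2 hv3, hC w hwu hw2 hw3]
    exact hgne v w hv2 hv3 hw2 hw3 hvw.ne (Or.inl hvw)
  · intro v hv
    have a1u : G.Adj u1 u := ((adju u1).2 (by simp)).symm
    have a4u : G.Adj u4 u := ((adju u4).2 (by simp)).symm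
    have a2u : G.Adj u2 u := ((adju u2).2 (by simp)).symm
    have a3u : G.Adj u3 u := ((adju u3).2 (by simp)).symm
    by_cases hvu : v = u
    · subst hvu
      rw [hset, Finset.coe_nonempty]
      apply oddOn_nonempty_of_odd_card
      have : G.neighborFinset v = {u1, u2, u3, u4, u5} := by
        ext w; simp [adju]
      rw [this]
      have h5 : ({u1, u2, u3, u4, u5} : Finset V).card = 5 := by
        rw [Finset.card_insert_of_notMem (by simp [*]), Finset.card_insert_of_notMem (by simp [*]),
          Finset.card_insert_of_notMem (by simp [*]), Finset.card_pair h4_5]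
      rw [h5]; decide
    by_cases hv2 : v = u2
    · subst hv2
      rw [hset, Finset.coe_nonempty, hsplit]
      simp only [h23, a2u, SimpleGraph.irrefl, if_true, if_false]
      rw [← Finset.bot_eq_empty, symmDiff_bot]
      exact symmDiff_singleton_nonempty hU2
    by_cases hv3 : v = u3
    · subst hv3
      rw [hset, Finset.coe_nonempty, hsplit]
      simp only [h23.symm, a3u, SimpleGraph.irrefl, if_true, if_false]
      rw [← Finset.bot_eq_empty, symmDiff_bot]
      exact symmDiff_singleton_nonempty hU3
    by_cases hv1 : v = u1
    · subst hv1
      rw [hset, Finset.coe_nonempty, hsplit]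
      simp only [h12, a1u, if_true]
      exact symmDiff_singleton_nonempty hU1
    by_cases hv4 : v = u4
    · subst hv4
      rw [hset, Finset.coe_nonempty, hsplit]
      simp only [h34.symm, a4u, if_true]
      rw [symmDiff_right_comm (O v)]
      exact symmDiff_singleton_nonempty hU4
    by_cases hT : G.Adj v u ∨ G.Adj v u2 ∨ G.Adj v u3
    · rw [hset, Finset.coe_nonempty, hsplit]
      refine protected_nonempty (hX v) hT hxy hxz hyz ?_ ?_ ?_
      · intro h
        obtain rfl : v = u5 := by simpa [hv1, hv2, hv3, hv4] using (adju v).1 h.symm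
        exact hx.2.2.2
      · intro h
        have hm : v = a ∨ v = b ∨ v = c := by simpa [hv1, hvu, hv3] using (adju2 v).1 h.symm
        exact fun h' => hy2 v ⟨hv4, hm⟩ h'.symm
      · intro h
        have hm : v = d ∨ v = e ∨ v = f := by simpa [hv2, hvu, hv4] using (adju3 v).1 h.symm
        exact fun h' => hz2 v hm h'.symm
    · -- Here the neighborhood of `v` and its colors are unchanged.
      simp only [not_or] at hT
      obtain ⟨hTu, hT2, hT3⟩ := hT
      have hadj : ∀ w : ({u2, u3}ᶜ : Set V),
          (lemma3ReducedGraph G u2 u3 a b c d e f).Adj ⟨v, hmem v hv2 hv3⟩ w ↔ G.Adj v w := by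
        have hnabc : v ∉ ({a, b, c} : Set V) := fun h => hT2 ((adju2 v).2 (by
          simp only [Set.mem_insert_iff, Set.mem_singleton_iff] at h
          exact Or.inr (Or.inr (Or.inr h)))).symm
        have hndef : v ∉ ({d, e, f} : Set V) := fun h => hT3 ((adju3 v).2 (by
          simp only [Set.mem_insert_iff, Set.mem_singleton_iff] at h
          exact Or.inr (Or.inr (Or.inr h)))).symm
        intro w
        rw [lemma3ReducedGraph, SimpleGraph.fromRel_adj]
        simp only [hnabc, hndef, false_and, and_false, or_false, G.adj_comm (w : V) v, or_self]
        exact ⟨fun h => h.2, fun h => ⟨fun h' => h.ne (congrArg Subtype.val h'), h⟩⟩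
      have hns : ∀ w, G.Adj v w → w ∈ ({u2, u3}ᶜ : Set V) := fun w hw =>
        hmem w (fun h => hT2 (h ▸ hw)) (fun h => hT3 (h ▸ hw))
      obtain ⟨t, ht⟩ := hodd ⟨v, hmem v hv2 hv3⟩ (by
        obtain ⟨w, hw⟩ := hv
        exact ⟨⟨w, hns w hw⟩, (hadj _).2 hw⟩)
      refine ⟨t, ?_⟩
      have himg : {w | w ∈ G.neighborSet v ∧ C w = t} = Subtype.val ''
          {w | w ∈ (lemma3ReducedGraph G u2 u3 a b c d e f).neighborSet ⟨v, hmem v hv2 hv3⟩ ∧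
            c' w = t} := by
        ext w
        constructor
        · rintro ⟨hw, hwt⟩
          have hw' : w ∈ ({u2, u3}ᶜ : Set V) := hns w hw
          refine ⟨⟨w, hw'⟩, ⟨(hadj _).2 hw, ?_⟩, rfl⟩
          rw [← hg w hw', ← hwt]
          exact (hC w (fun h => hTu (h ▸ hw)) (fun h => hT2 (h ▸ hw)) (fun h => hT3 (h ▸ hw))).symm
        · rintro ⟨⟨w, hw'⟩, ⟨hw, hwt⟩, rfl⟩
          have hw := (hadj _).1 hw
          refine ⟨hw, ?_⟩
          rw [hC w (fun h => hTu (h ▸ hw)) (fun h => hT2 (h ▸ hw)) (fun h => hT3 (h ▸ hw)),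
            hg w hw']
          exact hwt
      have ht' : Odd _ := ht
      change Odd _
      rw [himg, Set.ncard_image_of_injective _ Subtype.val_injective]
      exact ht'
end

section
/- Assume G contains the Figure-1 configuration, and let c be an odd 9-coloring of G − u with colors in {1,…,9} such that: c(u_1), c(u_2), c(u_3) are pairwise distinct, c(u_2) = c(u_6), c(u_3) = c(u_5); each of u_1, u_2, u_6 has exactly one odd color (with respect to c in G − u), denoted ō(u_1), ō(u_2), ō(u_6), these three colors are pairwise distinct, and none of ō(u_1), ō(u_2), ō(u_6) lies in {c(u_1), c(u_2), c(u_3), c(u_4)}. Then there exists a color c_1 ∈ {1,…,9} \ {c(u_1), c(u_2), c(u_3), c(u_5)} such that the coloring c' of G − u agreeing with c everywhere except that c'(u_1) = c_1 is again an odd 9-coloring of G − u, and with respect to c' each of u_2 and u_6 has at least 3 odd colors. -/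
/-- The Figure-1 configuration: 19 distinct vertices `u, u₁,…,u₆, v₁,…,v₁₂` such that
`u` is adjacent to exactly `u₁,…,u₆`, the neighborhoods of the `uᵢ` are as prescribed,
`v₁v₂⋯v₁₂v₁` is a cycle in `G`, and each `vⱼ` has degree exactly `6` in `G`. -/
def Fig1Config {V : Type*} (G : SimpleGraph V)
    (u u1 u2 u3 u4 u5 u6 v1 v2 v3 v4 v5 v6 v7 v8 v9 v10 v11 v12 : V) : Prop :=
  [u, u1, u2, u3, u4, u5, u6, v1, v2, v3, v4, v5, v6,
    v7, v8, v9, v10, v11, v12].Pairwise (· ≠ ·) ∧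
  G.neighborSet u = {u1, u2, u3, u4, u5, u6} ∧
  G.neighborSet u1 = {u6, u, u2, v12, v1, v2} ∧
  G.neighborSet u2 = {u1, u, u3, v2, v3, v4} ∧
  G.neighborSet u3 = {u2, u, u4, v4, v5, v6} ∧
  G.neighborSet u4 = {u3, u, u5, v6, v7, v8} ∧
  G.neighborSet u5 = {u4, u, u6, v8, v9, v10} ∧
  G.neighborSet u6 = {u5, u, u1, v10, v11, v12} ∧
  (G.Adj v1 v2 ∧ G.Adj v2 v3 ∧ G.Adj v3 v4 ∧ G.Adj v4 v5 ∧ G.Adj v5 v6 ∧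
    G.Adj v6 v7 ∧ G.Adj v7 v8 ∧ G.Adj v8 v9 ∧ G.Adj v9 v10 ∧ G.Adj v10 v11 ∧
    G.Adj v11 v12 ∧ G.Adj v12 v1) ∧
  ((G.neighborSet v1).ncard = 6 ∧ (G.neighborSet v2).ncard = 6 ∧
    (G.neighborSet v3).ncard = 6 ∧ (G.neighborSet v4).ncard = 6 ∧
    (G.neighborSet v5).ncard = 6 ∧ (G.neighborSet v6).ncard = 6 ∧
    (G.neighborSet v7).ncard = 6 ∧ (G.neighborSet v8).ncard = 6 ∧
    (G.neighborSet v9).ncard = 6 ∧ (G.neighborSet v10).ncard = 6 ∧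
    (G.neighborSet v11).ncard = 6 ∧ (G.neighborSet v12).ncard = 6)

/-- Parities of color classes at `v` can be read off any duplicate-free list of its neighbors. -/
lemma mem_oddColorSet_iff_count {W : Type*} (H : SimpleGraph W) (c : W → ℕ) (v : W) (l : List W)
    (hl : l.Nodup) (h : ∀ w, H.Adj v w ↔ w ∈ l) (t : ℕ) :
    t ∈ oddColorSet H c v ↔ Odd ((l.map c).count t) := by
  classical
  have key : {w | w ∈ H.neighborSet v ∧ c w = t} =
      ((l.filter (fun w => c w = t)).toFinset : Set W) := by
    ext w
    simp [h]
  rw [oddColorSet, Set.mem_ofPred_eq, key, Set.ncard_coe_finset,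
    List.toFinset_card_of_nodup (hl.filter _), List.count, List.countP_map,
    List.countP_eq_length_filter]
  congr! 4

lemma oddColorSet_update_of_not_adj {W : Type*} [DecidableEq W] (H : SimpleGraph W) (c : W → ℕ)
    (v w : W) (s : ℕ) (h : ¬ H.Adj v w) :
    oddColorSet H (Function.update c w s) v = oddColorSet H c v := by
  have key : ∀ t, {x | x ∈ H.neighborSet v ∧ Function.update c w s x = t} =
      {x | x ∈ H.neighborSet v ∧ c x = t} := by
    intro t
    ext x
    by_cases hx : x = w
    · subst hx
      simp [h]
    · simp [Function.update_of_ne hx]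
  simp only [oddColorSet, key]

/-- Recoloring a neighbor `w` of `v` toggles the parity of exactly the old and the new color of
`w`. -/
lemma oddColorSet_update_of_adj {W : Type*} [Finite W] [DecidableEq W] (H : SimpleGraph W)
    (c : W → ℕ) (v w : W) (s : ℕ) (h : H.Adj v w) (hs : s ≠ c w) :
    oddColorSet H (Function.update c w s) v = symmDiff (oddColorSet H c v) {c w, s} := by
  ext t
  simp only [oddColorSet, Set.mem_symmDiff, Set.mem_ofPred_eq, Set.mem_insert_iff,
    Set.mem_singleton_iff]
  by_cases ht : t = c w
  · have key : {x | x ∈ H.neighborSet v ∧ c x = t} =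
        insert w {x | x ∈ H.neighborSet v ∧ Function.update c w s x = t} := by
      ext x
      by_cases hx : x = w
      · subst hx
        simp [h, ht]
      · simp [hx]
    rw [key, Set.ncard_insert_of_notMem (by simp [ht, hs])]
    simp [ht, Nat.odd_add_one]
  · by_cases ht' : t = s
    · have key : {x | x ∈ H.neighborSet v ∧ Function.update c w s x = t} =
          insert w {x | x ∈ H.neighborSet v ∧ c x = t} := by
        ext x
        by_cases hx : x = w
        · subst hx
          simp [h, ht']
        · simp [hx]
      rw [key, Set.ncard_insert_of_notMem (by simp [Ne.symm ht])]
      simp [ht', Nat.odd_add_one]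
    · have key : {x | x ∈ H.neighborSet v ∧ Function.update c w s x = t} =
          {x | x ∈ H.neighborSet v ∧ c x = t} := by
        ext x
        by_cases hx : x = w
        · subst hx
          simp [Ne.symm ht, Ne.symm ht']
        · simp [Function.update_of_ne hx]
      rw [key]
      simp [ht, ht']

/-- Colors around `u₁`: here `b` is the color of `u₂, u₆`, and `x, y, z` are the colors of
`v₁₂, v₁, v₂`. -/
lemma center_colors {b x y z o : ℕ} (h : ∀ t, Odd ([b, b, x, y, z].count t) ↔ t = o)
    (hx : x ≠ b) (hz : z ≠ b) (hxy : x ≠ y) (hyz : y ≠ z) (ho : o ≠ b) : x = z ∧ y = o := by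
  have hb := h b
  have hx' := h x
  have hy' := h y
  simp only [List.count_cons, List.count_nil, beq_iff_eq, Nat.odd_iff] at hb hx' hy'
  grind

/-- Colors around `u₂` (and, mirrored, around `u₆`): `a, d` are the colors of `u₁, u₃`, and
`x, y, z` are those of `v₂, v₃, v₄`. -/
lemma side_colors {a d x y z o : ℕ} (h : ∀ t, Odd ([a, d, x, y, z].count t) ↔ t = o)
    (had : a ≠ d) (hx : x ≠ a) (hz : z ≠ d) (ha : o ≠ a) (hd : o ≠ d) :
    (x = d ∨ x = o) ∧ (x = d → y = a ∨ y = o) := by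
  have h1 := h a
  have h2 := h d
  have h3 := h x
  have h4 := h y
  simp only [List.count_cons, List.count_nil, beq_iff_eq, Nat.odd_iff] at h1 h2 h3 h4
  grind

/-- If the odd colors were exactly `a` and `s`, then `b` and `o` would have to appear at least
twice each, and with one `a` and one `s` this uses up all six neighbors, leaving no room for the
color of `n₄`. -/
lemma oddColorSet_ne_pair {W : Type*} (H : SimpleGraph W) (c : W → ℕ) (p n₁ n₂ n₃ n₄ : W)
    (hdeg : (H.neighborSet p).ncard = 6) (hnd : [n₁, n₂, n₃, n₄].Nodup)
    (h₁ : H.Adj p n₁) (h₂ : H.Adj p n₂) (h₃ : H.Adj p n₃) (h₄ : H.Adj p n₄)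
    {a b o q s : ℕ} (c₁ : c n₁ = a) (c₂ : c n₂ = b) (c₃ : c n₃ = o) (c₄ : c n₄ = a ∨ c n₄ = q)
    (hab : a ≠ b) (hao : a ≠ o) (hbo : b ≠ o) (hqa : q ≠ a) (hqb : q ≠ b) (hqo : q ≠ o)
    (hsa : s ≠ a) (hsb : s ≠ b) (hso : s ≠ o) (hsq : s ≠ q) :
    oddColorSet H c p ≠ {a, s} := by
  classical
  intro hS
  have hsub : (([n₁, n₂, n₃, n₄].toFinset : Finset W) : Set W) ⊆ H.neighborSet p := by
    intro w hw
    simp only [List.coe_toFinset, List.mem_cons, List.not_mem_nil, or_false,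
      Set.mem_ofPred_eq] at hw
    rcases hw with rfl | rfl | rfl | rfl <;> assumption
  have hcard : (H.neighborSet p \ (([n₁, n₂, n₃, n₄].toFinset : Finset W) : Set W)).ncard = 2 := by
    rw [Set.ncard_sdiff hsub (Finset.finite_toSet _), hdeg, Set.ncard_coe_finset,
      List.toFinset_card_of_nodup hnd]
    rfl
  obtain ⟨y, z, hyz, hE⟩ := Set.ncard_eq_two.mp hcard
  have hE' : ∀ w, (H.Adj p w ∧ w ∉ [n₁, n₂, n₃, n₄]) ↔ (w = y ∨ w = z) := by
    intro w
    have := Set.ext_iff.mp hE w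
    simpa using this
  have hcount := mem_oddColorSet_iff_count H c p [n₁, n₂, n₃, n₄, y, z]
    (by
      have hy := (hE' y).2 (Or.inl rfl)
      have hz := (hE' z).2 (Or.inr rfl)
      simp only [List.nodup_cons, List.mem_cons, List.not_mem_nil, or_false] at hnd hy hz ⊢
      grind)
    (by
      intro w
      have hw := hE' w
      simp only [List.mem_cons, List.not_mem_nil, or_false] at hw ⊢
      grind)
  rw [hS] at hcount
  simp only [List.map_cons, List.map_nil, c₁, c₂, c₃, List.count_cons, List.count_nil, beq_iff_eq,
    Nat.odd_iff, Set.mem_insert_iff, Set.mem_singleton_iff] at hcount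
  have ta := hcount a
  have tb := hcount b
  have t_o := hcount o
  have tq := hcount q
  have ts := hcount s
  clear hcount
  generalize c n₄ = e at *
  generalize c y = y' at *
  generalize c z = z' at *
  clear hE hE' hcard hsub hS hnd
  rcases c₄ with rfl | rfl <;> grind

/-- Replacing an odd color set `{o}` by its symmetric difference with `{a, s}` gives three
odd colors. -/
lemma three_le_ncard_symmDiff {a s o : ℕ} (hoa : o ≠ a) (hos : o ≠ s) (has : a ≠ s) :
    3 ≤ (symmDiff ({o} : Set ℕ) {a, s}).ncard := by
  have : symmDiff ({o} : Set ℕ) {a, s} = {o, a, s} := by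
    ext t
    simp only [Set.mem_symmDiff, Set.mem_insert_iff, Set.mem_singleton_iff]
    grind
  rw [this, Set.ncard_eq_toFinset_card']
  simp [hoa, hos, has]

theorem lemma4_recolor {V : Type*} [Fintype V] [DecidableEq V] (G : SimpleGraph V)
    (u u1 u2 u3 u4 u5 u6 v1 v2 v3 v4 v5 v6 v7 v8 v9 v10 v11 v12 : V)
    (hfig : Fig1Config G u u1 u2 u3 u4 u5 u6 v1 v2 v3 v4 v5 v6 v7 v8 v9 v10 v11 v12)
    (h1 : u1 ∈ ({u}ᶜ : Set V)) (h2 : u2 ∈ ({u}ᶜ : Set V)) (h3 : u3 ∈ ({u}ᶜ : Set V))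
    (h4 : u4 ∈ ({u}ᶜ : Set V)) (h5 : u5 ∈ ({u}ᶜ : Set V)) (h6 : u6 ∈ ({u}ᶜ : Set V))
    (c : ({u}ᶜ : Set V) → ℕ)
    (hrange : ∀ x, c x ∈ Set.Icc 1 9)
    (hodd : IsOddColoring (G.induce ({u}ᶜ : Set V)) c)
    (hne12 : c ⟨u1, h1⟩ ≠ c ⟨u2, h2⟩) (hne13 : c ⟨u1, h1⟩ ≠ c ⟨u3, h3⟩)
    (hne23 : c ⟨u2, h2⟩ ≠ c ⟨u3, h3⟩)
    (hc26 : c ⟨u2, h2⟩ = c ⟨u6, h6⟩) (hc35 : c ⟨u3, h3⟩ = c ⟨u5, h5⟩)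
    (o1 o2 o6 : ℕ)
    (ho1 : oddColorSet (G.induce ({u}ᶜ : Set V)) c ⟨u1, h1⟩ = {o1})
    (ho2 : oddColorSet (G.induce ({u}ᶜ : Set V)) c ⟨u2, h2⟩ = {o2})
    (ho6 : oddColorSet (G.induce ({u}ᶜ : Set V)) c ⟨u6, h6⟩ = {o6})
    (ho12 : o1 ≠ o2) (ho26 : o2 ≠ o6) (ho16 : o1 ≠ o6)
    (hnotin : ∀ o ∈ ({o1, o2, o6} : Set ℕ),
      o ∉ ({c ⟨u1, h1⟩, c ⟨u2, h2⟩, c ⟨u3, h3⟩, c ⟨u4, h4⟩} : Set ℕ)) :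
    ∃ c1 ∈ (Set.Icc 1 9 \
        {c ⟨u1, h1⟩, c ⟨u2, h2⟩, c ⟨u3, h3⟩, c ⟨u5, h5⟩} : Set ℕ),
      (∀ x, Function.update c ⟨u1, h1⟩ c1 x ∈ Set.Icc 1 9) ∧
      IsOddColoring (G.induce ({u}ᶜ : Set V)) (Function.update c ⟨u1, h1⟩ c1) ∧
      3 ≤ (oddColorSet (G.induce ({u}ᶜ : Set V))
            (Function.update c ⟨u1, h1⟩ c1) ⟨u2, h2⟩).ncard ∧
      3 ≤ (oddColorSet (G.induce ({u}ᶜ : Set V))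
            (Function.update c ⟨u1, h1⟩ c1) ⟨u6, h6⟩).ncard := by
  classical
  obtain ⟨hpw, hu, hN1, hN2, hN3, -, hN5, hN6, ⟨a12, a23, -, -, -, -, -, -, -, -, a1112, a121⟩,
    ⟨-, hd2, -, -, -, -, -, -, -, -, -, hd12⟩⟩ := hfig
  simp only [List.pairwise_cons, List.mem_cons, List.not_mem_nil, or_false, forall_eq_or_imp,
    forall_eq] at hpw
  have m1 : v1 ∈ ({u}ᶜ : Set V) := by simp only [Set.mem_compl_singleton_iff]; grind
  have m2 : v2 ∈ ({u}ᶜ : Set V) := by simp only [Set.mem_compl_singleton_iff]; grind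
  have m3 : v3 ∈ ({u}ᶜ : Set V) := by simp only [Set.mem_compl_singleton_iff]; grind
  have m4 : v4 ∈ ({u}ᶜ : Set V) := by simp only [Set.mem_compl_singleton_iff]; grind
  have m10 : v10 ∈ ({u}ᶜ : Set V) := by simp only [Set.mem_compl_singleton_iff]; grind
  have m11 : v11 ∈ ({u}ᶜ : Set V) := by simp only [Set.mem_compl_singleton_iff]; grind
  have m12 : v12 ∈ ({u}ᶜ : Set V) := by simp only [Set.mem_compl_singleton_iff]; grind
  have A1 : ∀ w, G.Adj u1 w ↔ w = u6 ∨ w = u ∨ w = u2 ∨ w = v12 ∨ w = v1 ∨ w = v2 :=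
    fun w => by simpa using Set.ext_iff.mp hN1 w
  have A2 : ∀ w, G.Adj u2 w ↔ w = u1 ∨ w = u ∨ w = u3 ∨ w = v2 ∨ w = v3 ∨ w = v4 :=
    fun w => by simpa using Set.ext_iff.mp hN2 w
  have A6 : ∀ w, G.Adj u6 w ↔ w = u5 ∨ w = u ∨ w = u1 ∨ w = v10 ∨ w = v11 ∨ w = v12 :=
    fun w => by simpa using Set.ext_iff.mp hN6 w
  have A0 : ∀ w, G.Adj u w ↔ w = u1 ∨ w = u2 ∨ w = u3 ∨ w = u4 ∨ w = u5 ∨ w = u6 :=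
    fun w => by simpa using Set.ext_iff.mp hu w
  set H := G.induce ({u}ᶜ : Set V) with hH
  have hadj : ∀ x y (hx : x ∈ ({u}ᶜ : Set V)) (hy : y ∈ ({u}ᶜ : Set V)),
      H.Adj ⟨x, hx⟩ ⟨y, hy⟩ ↔ G.Adj x y := fun x y hx hy => Iff.rfl
  have hproper : ∀ x y (hx : x ∈ ({u}ᶜ : Set V)) (hy : y ∈ ({u}ᶜ : Set V)),
      G.Adj x y → c ⟨x, hx⟩ ≠ c ⟨y, hy⟩ := fun x y hx hy h => hodd.1 ((hadj x y hx hy).2 h)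
  -- A vertex not adjacent to `u` keeps its degree in `G - u`.
  have hdegH : ∀ x (hx : x ∈ ({u}ᶜ : Set V)), ¬ G.Adj u x →
      (H.neighborSet ⟨x, hx⟩).ncard = (G.neighborSet x).ncard := by
    intro x hx hux
    rw [← Set.ncard_image_of_injective _ Subtype.val_injective]
    congr 1
    ext w
    simp only [Set.mem_image, SimpleGraph.mem_neighborSet, Subtype.exists, exists_and_right,
      exists_eq_right, hadj]
    constructor
    · rintro ⟨_, h⟩
      exact h
    · intro h
      exact ⟨fun hw => hux (by rw [Set.mem_singleton_iff.mp hw] at h; exact h.symm), h⟩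
  have q1 := mem_oddColorSet_iff_count H c ⟨u1, h1⟩
    [⟨u6, h6⟩, ⟨u2, h2⟩, ⟨v12, m12⟩, ⟨v1, m1⟩, ⟨v2, m2⟩]
    (by simp only [List.nodup_cons, List.mem_cons, List.not_mem_nil, Subtype.mk.injEq]; grind)
    (by
      rintro ⟨w, hw⟩
      simp only [List.mem_cons, List.not_mem_nil, Subtype.mk.injEq, hadj, A1]
      simp only [Set.mem_compl_singleton_iff] at hw
      grind)
  have q2 := mem_oddColorSet_iff_count H c ⟨u2, h2⟩
    [⟨u1, h1⟩, ⟨u3, h3⟩, ⟨v2, m2⟩, ⟨v3, m3⟩, ⟨v4, m4⟩]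
    (by simp only [List.nodup_cons, List.mem_cons, List.not_mem_nil, Subtype.mk.injEq]; grind)
    (by
      rintro ⟨w, hw⟩
      simp only [List.mem_cons, List.not_mem_nil, Subtype.mk.injEq, hadj, A2]
      simp only [Set.mem_compl_singleton_iff] at hw
      grind)
  have q6 := mem_oddColorSet_iff_count H c ⟨u6, h6⟩
    [⟨u1, h1⟩, ⟨u5, h5⟩, ⟨v12, m12⟩, ⟨v11, m11⟩, ⟨v10, m10⟩]
    (by simp only [List.nodup_cons, List.mem_cons, List.not_mem_nil, Subtype.mk.injEq]; grind)
    (by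
      rintro ⟨w, hw⟩
      simp only [List.mem_cons, List.not_mem_nil, Subtype.mk.injEq, hadj, A6]
      simp only [Set.mem_compl_singleton_iff] at hw
      grind)
  simp only [ho1, ho2, ho6, List.map_cons, List.map_nil, Set.mem_singleton_iff, ← hc26, ← hc35]
    at q1 q2 q6
  have n1 := hnotin o1 (by simp)
  have n2 := hnotin o2 (by simp)
  have n6 := hnotin o6 (by simp)
  simp only [Set.mem_insert_iff, Set.mem_singleton_iff, not_or] at n1 n2 n6
  have b12 : G.Adj u1 v12 := (A1 _).2 (by simp)
  have b2 : G.Adj u1 v2 := (A1 _).2 (by simp)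
  have b1 : G.Adj u1 v1 := (A1 _).2 (by simp)
  have e12 : G.Adj u1 u2 := (A1 _).2 (by simp)
  have e16 : G.Adj u1 u6 := (A1 _).2 (by simp)
  have e22 : G.Adj u2 v2 := (A2 _).2 (by simp)
  have e612 : G.Adj u6 v12 := (A6 _).2 (by simp)
  have e34 : c ⟨v4, m4⟩ ≠ c ⟨u3, h3⟩ := by
    have : G.Adj u3 v4 := by
      have := Set.ext_iff.mp hN3 v4
      simpa using this
    exact (hproper _ _ h3 m4 this).symm
  have e510 : c ⟨v10, m10⟩ ≠ c ⟨u3, h3⟩ := by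
    have : G.Adj u5 v10 := by
      have := Set.ext_iff.mp hN5 v10
      simpa using this
    rw [hc35]
    exact (hproper _ _ h5 m10 this).symm
  obtain ⟨hx, hv1⟩ := center_colors (fun t => (q1 t).symm)
    (by rw [hc26]; exact (hproper _ _ h6 m12 e612).symm) (hproper _ _ h2 m2 e22).symm
    (hproper _ _ m12 m1 a121) (hproper _ _ m1 m2 a12) n1.2.1
  obtain ⟨r2, s2⟩ := side_colors (fun t => (q2 t).symm) hne13 (hproper _ _ h1 m2 b2).symm e34
    n2.1 n2.2.2.1
  obtain ⟨r6, s6⟩ := side_colors (fun t => (q6 t).symm) hne13 (hproper _ _ h1 m12 b12).symm e510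
    n6.1 n6.2.2.1
  have hv2 : c ⟨v2, m2⟩ = c ⟨u3, h3⟩ := by grind
  have hv12 : c ⟨v12, m12⟩ = c ⟨u3, h3⟩ := hx.trans hv2
  have hv3 := s2 hv2
  have hv11 := s6 hv12
  -- `f` is the only new color that could destroy all odd colors of `v1`.
  obtain ⟨f, hf⟩ : ∃ f, ∀ t, t ≠ c ⟨u1, h1⟩ →
      oddColorSet H c ⟨v1, m1⟩ = {c ⟨u1, h1⟩, t} → t = f := by
    by_cases h : ∃ f, f ≠ c ⟨u1, h1⟩ ∧ oddColorSet H c ⟨v1, m1⟩ = {c ⟨u1, h1⟩, f}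
    · obtain ⟨f, -, hfS⟩ := h
      refine ⟨f, fun t ht htS => ?_⟩
      have : t ∈ ({c ⟨u1, h1⟩, f} : Set ℕ) := by
        rw [← hfS, htS]
        simp
      simpa [ht] using this
    · exact ⟨0, fun t ht htS => absurd ⟨t, ht, htS⟩ h⟩
  obtain ⟨s, hs, hsn⟩ : ∃ s ∈ Finset.Icc 1 9,
      s ∉ [c ⟨u1, h1⟩, c ⟨u2, h2⟩, c ⟨u3, h3⟩, o1, o2, o6, f].toFinset := by
    apply Finset.exists_mem_notMem_of_card_lt_card
    refine (List.toFinset_card_le _).trans_lt ?_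
    simp
  simp only [List.mem_toFinset, List.mem_cons, List.not_mem_nil, or_false, not_or] at hsn
  obtain ⟨sa, sb, sd, so1, so2, so6, sf⟩ := hsn
  rw [Finset.mem_Icc] at hs
  -- The colors around `u1` are `b, b, d, o1, d`.
  have hnbr : ∀ y : ({u}ᶜ : Set V), H.Adj ⟨u1, h1⟩ y → s ≠ c y := by
    rintro ⟨y, hy⟩ h
    rw [hadj, A1] at h
    rcases h with rfl | rfl | rfl | rfl | rfl | rfl
    · rwa [← hc26]
    · simp at hy
    · exact sb
    · rwa [hv12]
    · rwa [hv1]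
    · rwa [hv2]
  refine ⟨s, ⟨hs, ?_⟩, ?_, ⟨?_, ?_⟩, ?_, ?_⟩
  · simp only [Set.mem_insert_iff, Set.mem_singleton_iff, not_or, ← hc35]
    exact ⟨sa, sb, sd, sd⟩
  · intro x
    by_cases hx : x = ⟨u1, h1⟩
    · subst hx
      simpa using hs
    · rw [Function.update_of_ne hx]
      exact hrange x
  · intro x y hxy
    by_cases hx : x = ⟨u1, h1⟩
    · subst hx
      rw [Function.update_self, Function.update_of_ne hxy.ne']
      exact hnbr y hxy
    · rw [Function.update_of_ne hx]
      by_cases hy : y = ⟨u1, h1⟩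
      · subst hy
        rw [Function.update_self]
        exact (hnbr x hxy.symm).symm
      · rw [Function.update_of_ne hy]
        exact hodd.1 hxy
  · intro x hx
    by_cases hxa : H.Adj x ⟨u1, h1⟩
    · rw [oddColorSet_update_of_adj H c x _ s hxa sa, Set.nonempty_iff_ne_empty, ← Set.bot_eq_empty,
        Ne, symmDiff_eq_bot]
      obtain ⟨x, hxm⟩ := x
      have h := (A1 x).1 hxa.symm
      have notU2 : ¬ G.Adj u v2 := by rw [A0]; grind
      have notU12 : ¬ G.Adj u v12 := by rw [A0]; grind
      -- A singleton cannot be the pair `{a, s}`.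
      have hsingle : ∀ o : ℕ, ({o} : Set ℕ) ≠ {c ⟨u1, h1⟩, s} := by
        intro o h
        have ha : c ⟨u1, h1⟩ ∈ ({o} : Set ℕ) := by rw [h]; simp
        have hs' : s ∈ ({o} : Set ℕ) := by rw [h]; simp
        exact sa (hs'.trans ha.symm)
      rcases h with rfl | rfl | rfl | rfl | rfl | rfl
      · rw [ho6]
        exact hsingle o6
      · simp at hxm
      · rw [ho2]
        exact hsingle o2
      · exact oddColorSet_ne_pair H c _ ⟨u1, h1⟩ ⟨u6, h6⟩ ⟨v1, m1⟩ ⟨v11, m11⟩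
          ((hdegH _ _ notU12).trans hd12)
          (by simp only [List.nodup_cons, List.mem_cons, List.not_mem_nil, Subtype.mk.injEq]; grind)
          b12.symm e612.symm a121 a1112.symm rfl hc26.symm hv1 hv11
          hne12 (Ne.symm n1.1) (Ne.symm n1.2.1) n6.1 n6.2.1 ho16.symm sa sb so1 so6
      · exact fun h => sf (hf s sa h)
      · exact oddColorSet_ne_pair H c _ ⟨u1, h1⟩ ⟨u2, h2⟩ ⟨v1, m1⟩ ⟨v3, m3⟩
          ((hdegH _ _ notU2).trans hd2)
          (by simp only [List.nodup_cons, List.mem_cons, List.not_mem_nil, Subtype.mk.injEq]; grind)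
          b2.symm e22.symm a12.symm a23 rfl rfl hv1 hv3
          hne12 (Ne.symm n1.1) (Ne.symm n1.2.1) n2.1 n2.2.1 ho12.symm sa sb so1 so2
    · rw [oddColorSet_update_of_not_adj H c x _ s hxa]
      exact hodd.2 x hx
  · rw [oddColorSet_update_of_adj H c ⟨u2, h2⟩ ⟨u1, h1⟩ s e12.symm sa, ho2]
    exact three_le_ncard_symmDiff n2.1 (Ne.symm so2) (Ne.symm sa)
  · rw [oddColorSet_update_of_adj H c ⟨u6, h6⟩ ⟨u1, h1⟩ s e16.symm sa, ho6]
    exact three_le_ncard_symmDiff n6.1 (Ne.symm so6) (Ne.symm sa)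
end

section
/- Assume G contains the Figure-1 configuration, and let c be an odd 9-coloring of G − u with colors in {1,…,9} such that c(u_6) = c(u_2) and the colors c(u_1), c(u_2), c(u_3), c(u_5) are pairwise distinct, and each of u_1, u_2, u_6 has exactly one odd color (with respect to c in G − u), denoted ō(u_1), ō(u_2), ō(u_6). Then the set {ō(u_1), ō(u_2), ō(u_6)} contains at most two distinct colors outside {c(u_1), c(u_2), c(u_3), c(u_5)}; that is, |{ō(u_1), ō(u_2), ō(u_6)} \ {c(u_1), c(u_2), c(u_3), c(u_5)}| ≤ 2. -/
/-- For a vertex with exactly five neighbors, membership in the set of odd colors is a parity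
condition on a sum of five indicators. -/
lemma mem_oddColorSet_iff {W : Type*} (H : SimpleGraph W) (c : W → ℕ)
    {x p q r s w : W} (hN : H.neighborSet x = {p, q, r, s, w})
    (hd : [p, q, r, s, w].Nodup) (a : ℕ) :
    a ∈ oddColorSet H c x ↔
      Odd ((if c p = a then 1 else 0) + (if c q = a then 1 else 0) +
        (if c r = a then 1 else 0) + (if c s = a then 1 else 0) +
        (if c w = a then 1 else 0)) := by
  classical
  have hset : {y | y ∈ H.neighborSet x ∧ c y = a} =
      ((({p, q, r, s, w} : Finset W).filter (fun y => c y = a) : Finset W) : Set W) := by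
    ext y
    simp [hN]
  simp only [oddColorSet, Set.mem_ofPred_eq]
  rw [hset, Set.ncard_coe_finset, Finset.card_filter]
  simp only [List.nodup_cons, List.mem_cons, List.not_mem_nil, not_or] at hd
  obtain ⟨⟨h1, h2, h3, h4, -⟩, ⟨h5, h6, h7, -⟩, ⟨h8, h9, -⟩, ⟨h10, -⟩, -⟩ := hd
  rw [Finset.sum_insert (by simp [*]), Finset.sum_insert (by simp [*]),
    Finset.sum_insert (by simp [*]), Finset.sum_insert (by simp [*]), Finset.sum_singleton]
  simp only [add_assoc]

/-- Applied at `u₁`: two neighbors `p, q` of equal color cancel modulo 2, so if the outer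
neighbors `r, w` had different colors, both of these would be odd. -/
lemma eq_of_unique_odd_color {W : Type*} (H : SimpleGraph W) (c : W → ℕ)
    {x p q r s w : W} (hN : H.neighborSet x = {p, q, r, s, w})
    (hd : [p, q, r, s, w].Nodup) {o : ℕ} (ho : oddColorSet H c x = {o})
    (hpq : c p = c q) (hrp : c r ≠ c p) (hwp : c w ≠ c p) (hrs : c r ≠ c s) (hsw : c s ≠ c w) :
    c r = c w := by
  by_contra hne
  have hr := mem_oddColorSet_iff H c hN hd (c r)
  have hw := mem_oddColorSet_iff H c hN hd (c w)
  rw [ho, Set.mem_singleton_iff] at hr hw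
  have hr' : c r = o := hr.2 (by
    simp [← hpq, hrp.symm, hrs.symm, Ne.symm hne])
  have hw' : c w = o := hw.2 (by
    simp [← hpq, hwp.symm, hsw, hne])
  exact hne (hr'.trans hw'.symm)

/-- Applied at `u₂` and `u₆`: if the color of `r` is not odd, it must be repeated, by `q` or `w`.
Were it `w` and not `q`, evenness of `c p` would force `c s = c p`, leaving `c q` as an odd
color. -/
lemma color_eq_or_eq_odd_color {W : Type*} (H : SimpleGraph W) (c : W → ℕ)
    {x p q r s w : W} (hN : H.neighborSet x = {p, q, r, s, w})
    (hd : [p, q, r, s, w].Nodup) {o : ℕ} (ho : oddColorSet H c x = {o})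
    (hpq : c p ≠ c q) (hrp : c r ≠ c p) (hrs : c r ≠ c s)
    (hop : o ≠ c p) (hoq : o ≠ c q) :
    c r = c q ∨ c r = o := by
  by_contra! hne
  obtain ⟨hrq, hro⟩ := hne
  have hr := mem_oddColorSet_iff H c hN hd (c r)
  have hp := mem_oddColorSet_iff H c hN hd (c p)
  have hq := mem_oddColorSet_iff H c hN hd (c q)
  rw [ho, Set.mem_singleton_iff] at hr hp hq
  simp only [hro, hop.symm, hoq.symm, false_iff, Nat.not_odd_iff_even, Nat.even_iff] at hr hp hq
  grind

/-- Neighborhoods in `G - u` of a vertex adjacent to `u` with five other neighbors. -/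
lemma neighborSet_induce_compl {V : Type*} (G : SimpleGraph V) {u x p q r s w : V}
    (hx : x ∈ ({u}ᶜ : Set V)) (hp : p ∈ ({u}ᶜ : Set V)) (hq : q ∈ ({u}ᶜ : Set V))
    (hr : r ∈ ({u}ᶜ : Set V)) (hs : s ∈ ({u}ᶜ : Set V)) (hw : w ∈ ({u}ᶜ : Set V))
    (hN : G.neighborSet x = {p, u, q, r, s, w}) :
    (G.induce ({u}ᶜ : Set V)).neighborSet ⟨x, hx⟩ =
      {⟨p, hp⟩, ⟨q, hq⟩, ⟨r, hr⟩, ⟨s, hs⟩, ⟨w, hw⟩} := by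
  ext ⟨y, hy⟩
  have h : y ∈ G.neighborSet x ↔ y ∈ ({p, u, q, r, s, w} : Set V) := by rw [hN]
  have hyu : y ≠ u := hy
  simpa [hyu] using h

theorem lemma5_odd_colors {V : Type*} [Fintype V] [DecidableEq V] (G : SimpleGraph V)
    (u u1 u2 u3 u4 u5 u6 v1 v2 v3 v4 v5 v6 v7 v8 v9 v10 v11 v12 : V)
    (hfig : Fig1Config G u u1 u2 u3 u4 u5 u6 v1 v2 v3 v4 v5 v6 v7 v8 v9 v10 v11 v12)
    (h1 : u1 ∈ ({u}ᶜ : Set V)) (h2 : u2 ∈ ({u}ᶜ : Set V)) (h3 : u3 ∈ ({u}ᶜ : Set V))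
    (h5 : u5 ∈ ({u}ᶜ : Set V)) (h6 : u6 ∈ ({u}ᶜ : Set V))
    (c : ({u}ᶜ : Set V) → ℕ)
    (hrange : ∀ x, c x ∈ Set.Icc 1 9)
    (hodd : IsOddColoring (G.induce ({u}ᶜ : Set V)) c)
    (hc62 : c ⟨u6, h6⟩ = c ⟨u2, h2⟩)
    (hdist : [c ⟨u1, h1⟩, c ⟨u2, h2⟩, c ⟨u3, h3⟩, c ⟨u5, h5⟩].Pairwise (· ≠ ·))
    (o1 o2 o6 : ℕ)
    (ho1 : oddColorSet (G.induce ({u}ᶜ : Set V)) c ⟨u1, h1⟩ = {o1})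
    (ho2 : oddColorSet (G.induce ({u}ᶜ : Set V)) c ⟨u2, h2⟩ = {o2})
    (ho6 : oddColorSet (G.induce ({u}ᶜ : Set V)) c ⟨u6, h6⟩ = {o6}) :
    (({o1, o2, o6} : Set ℕ) \
      ({c ⟨u1, h1⟩, c ⟨u2, h2⟩, c ⟨u3, h3⟩, c ⟨u5, h5⟩} : Set ℕ)).ncard ≤ 2 := by
  obtain ⟨hne, -, hN1, hN2, -, -, -, hN6, hcyc, -⟩ := hfig
  obtain ⟨a12, a23, -, -, -, -, -, -, -, -, a1112, a121⟩ := hcyc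
  have hproper := hodd.1
  simp only [List.pairwise_cons, List.mem_cons, List.not_mem_nil, or_false, forall_eq_or_imp,
    forall_eq] at hne hdist
  obtain ⟨⟨-, hd13, hd15⟩, -, hd35, -⟩ := hdist
  have m1 : v1 ∈ ({u}ᶜ : Set V) := by simp; grind
  have m2 : v2 ∈ ({u}ᶜ : Set V) := by simp; grind
  have m3 : v3 ∈ ({u}ᶜ : Set V) := by simp; grind
  have m4 : v4 ∈ ({u}ᶜ : Set V) := by simp; grind
  have m10 : v10 ∈ ({u}ᶜ : Set V) := by simp; grind
  have m11 : v11 ∈ ({u}ᶜ : Set V) := by simp; grind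
  have m12 : v12 ∈ ({u}ᶜ : Set V) := by simp; grind
  have col : ∀ {x y : V} (hx : x ∈ ({u}ᶜ : Set V)) (hy : y ∈ ({u}ᶜ : Set V)),
      G.Adj x y → c ⟨x, hx⟩ ≠ c ⟨y, hy⟩ := fun hx hy h => hproper (by simpa using h)
  have adj1 : ∀ y, y ∈ ({u6, u, u2, v12, v1, v2} : Set V) → G.Adj u1 y := fun y hy => by
    rw [← hN1] at hy; exact hy
  have adj2 : ∀ y, y ∈ ({u1, u, u3, v2, v3, v4} : Set V) → G.Adj u2 y := fun y hy => by
    rw [← hN2] at hy; exact hy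
  have adj6 : ∀ y, y ∈ ({u5, u, u1, v10, v11, v12} : Set V) → G.Adj u6 y := fun y hy => by
    rw [← hN6] at hy; exact hy
  have ht : c ⟨v12, m12⟩ = c ⟨v2, m2⟩ :=
    eq_of_unique_odd_color _ c (neighborSet_induce_compl G h1 h6 h2 m12 m1 m2 hN1)
      (by simp; grind) ho1 hc62 (col h6 m12 (adj6 _ (by simp))).symm
      (by rw [hc62]; exact (col h2 m2 (adj2 _ (by simp))).symm)
      (col m12 m1 a121) (col m1 m2 a12)
  have hA : o2 ≠ c ⟨u1, h1⟩ → o2 ≠ c ⟨u3, h3⟩ → c ⟨v2, m2⟩ = c ⟨u3, h3⟩ ∨ c ⟨v2, m2⟩ = o2 :=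
    color_eq_or_eq_odd_color _ c (neighborSet_induce_compl G h2 h1 h3 m2 m3 m4 hN2)
      (by simp; grind) ho2 hd13 (col h1 m2 (adj1 _ (by simp))).symm (col m2 m3 a23)
  -- The reflected configuration: the neighbors of `u₆` are listed starting from `u₁`.
  have hN6' : G.neighborSet u6 = {u1, u, u5, v12, v11, v10} := by
    rw [hN6]
    clear * -
    ext y
    simp only [Set.mem_insert_iff, Set.mem_singleton_iff]
    tauto
  have hB : o6 ≠ c ⟨u1, h1⟩ → o6 ≠ c ⟨u5, h5⟩ → c ⟨v12, m12⟩ = c ⟨u5, h5⟩ ∨ c ⟨v12, m12⟩ = o6 :=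
    color_eq_or_eq_odd_color _ c (neighborSet_induce_compl G h6 h1 h5 m12 m11 m10 hN6')
      (by simp; grind) ho6 hd15 (col h1 m12 (adj1 _ (by simp))).symm
      (col m12 m11 a1112.symm)
  clear hne hN1 hN2 hN6 hN6' adj1 adj2 adj6 col hproper hrange hodd ho1 ho2 ho6
  set S : Set ℕ := {c ⟨u1, h1⟩, c ⟨u2, h2⟩, c ⟨u3, h3⟩, c ⟨u5, h5⟩} with hS
  have hkey : o2 ∈ S ∨ o6 ∈ S ∨ o2 = o6 := by
    simp only [hS, Set.mem_insert_iff, Set.mem_singleton_iff]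
    by_contra! hcon
    have hA' := hA (by grind) (by grind)
    have hB' := hB (by grind) (by grind)
    rw [ht] at hB'
    grind
  have bound : ∀ x y : ℕ, ({o1, o2, o6} : Set ℕ) \ S ⊆ {x, y} →
      (({o1, o2, o6} : Set ℕ) \ S).ncard ≤ 2 := fun x y h =>
    (Set.ncard_le_ncard h (Set.toFinite _)).trans (by
      simpa using Set.ncard_insert_le x ({y} : Set ℕ))
  rcases hkey with h | h | h
  · apply bound o1 o6
    rintro y ⟨rfl | rfl | rfl, hy⟩ <;> first | exact absurd h hy | simp
  · apply bound o1 o2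
    rintro y ⟨rfl | rfl | rfl, hy⟩ <;> first | exact absurd h hy | simp
  · apply bound o1 o2
    rintro y ⟨rfl | rfl | rfl, hy⟩ <;> simp [h]
end

section
/- Assume G contains the Figure-1 configuration, and let c be an odd 9-coloring of G − u with colors in {1,…,9} such that the colors c(u_1), c(u_2), c(u_3), c(u_6) are pairwise distinct, and each of u_1, u_2 has exactly one odd color (with respect to c in G − u), denoted ō(u_1), ō(u_2). Then the set {ō(u_1), ō(u_2)} contains at most one color outside {c(u_1), c(u_2), c(u_3), c(u_6)}; that is, |{ō(u_1), ō(u_2)} \ {c(u_1), c(u_2), c(u_3), c(u_6)}| ≤ 1. -/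
/-- If a vertex has exactly the five neighbors `a, b, x, y, z` and a unique odd color `o`, and
`a, b` have distinct colors other than `o`, then `z` has the color of `a`, the color of `b`, or
`o`. Indeed the colors of `a` and `b` occur an even number of times, so each recurs among
`x, y, z`; if `z` has neither of them, then `x, y` do, and the color of `z` occurs exactly once. -/
theorem color_mem_of_five_neighbors {W α : Type*} (H : SimpleGraph W) (f : W → α)
    (p a b x y z : W) (hN : H.neighborSet p = {a, b, x, y, z})
    (hne : [a, b, x, y, z].Pairwise (· ≠ ·)) (o : α) (ho : oddColorSet H f p = {o})
    (hab : f a ≠ f b) (ha : f a ≠ o) (hb : f b ≠ o) :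
    f z = f a ∨ f z = f b ∨ f z = o := by
  classical
  have key : ∀ k, Odd ((if f a = k then 1 else 0) + ((if f b = k then 1 else 0) +
      ((if f x = k then 1 else 0) + ((if f y = k then 1 else 0) +
      (if f z = k then 1 else 0))))) ↔ k = o := by
    intro k
    have h : k ∈ oddColorSet H f p ↔ k = o := by rw [ho]; rfl
    rw [← h, oddColorSet, Set.mem_ofPred_eq]
    have hset : {w | w ∈ H.neighborSet p ∧ f w = k} =
        ((({a, b, x, y, z} : Finset W).filter (fun w => f w = k) : Finset W) : Set W) := by
      ext w; simp [hN]
    rw [hset, Set.ncard_coe_finset, Finset.card_filter]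
    simp only [List.pairwise_cons, List.mem_cons, List.not_mem_nil, or_false, forall_eq_or_imp,
      forall_eq] at hne
    obtain ⟨⟨h1, h2, h3, h4⟩, ⟨h5, h6, h7⟩, ⟨h8, h9⟩, h10, -⟩ := hne
    rw [Finset.sum_insert (by simp [*]), Finset.sum_insert (by simp [*]),
      Finset.sum_insert (by simp [*]), Finset.sum_insert (by simp [*]), Finset.sum_singleton]
  have ka := key (f a)
  have kb := key (f b)
  have kz := key (f z)
  by_contra! hcon
  obtain ⟨hza, hzb, hzo⟩ := hcon
  simp only [ha, hb, hzo, iff_false, Nat.not_odd_iff, if_true, hab, hab.symm, hza, hzb,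
    hza.symm, hzb.symm, if_false] at ka kb kz
  grind

theorem lemma6_odd_colors {V : Type*} [Fintype V] [DecidableEq V] (G : SimpleGraph V)
    (u u1 u2 u3 u4 u5 u6 v1 v2 v3 v4 v5 v6 v7 v8 v9 v10 v11 v12 : V)
    (hfig : Fig1Config G u u1 u2 u3 u4 u5 u6 v1 v2 v3 v4 v5 v6 v7 v8 v9 v10 v11 v12)
    (h1 : u1 ∈ ({u}ᶜ : Set V)) (h2 : u2 ∈ ({u}ᶜ : Set V)) (h3 : u3 ∈ ({u}ᶜ : Set V))
    (h6 : u6 ∈ ({u}ᶜ : Set V))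
    (c : ({u}ᶜ : Set V) → ℕ)
    (hrange : ∀ x, c x ∈ Set.Icc 1 9)
    (hodd : IsOddColoring (G.induce ({u}ᶜ : Set V)) c)
    (hdist : [c ⟨u1, h1⟩, c ⟨u2, h2⟩, c ⟨u3, h3⟩, c ⟨u6, h6⟩].Pairwise (· ≠ ·))
    (o1 o2 : ℕ)
    (ho1 : oddColorSet (G.induce ({u}ᶜ : Set V)) c ⟨u1, h1⟩ = {o1})
    (ho2 : oddColorSet (G.induce ({u}ᶜ : Set V)) c ⟨u2, h2⟩ = {o2}) :
    (({o1, o2} : Set ℕ) \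
      ({c ⟨u1, h1⟩, c ⟨u2, h2⟩, c ⟨u3, h3⟩, c ⟨u6, h6⟩} : Set ℕ)).ncard ≤ 1 := by
  obtain ⟨hne, -, hN1, hN2, -⟩ := hfig
  simp only [List.pairwise_cons, List.mem_cons, List.not_mem_nil, or_false, forall_eq_or_imp,
    forall_eq] at hne hdist
  have m2 : v2 ∈ ({u}ᶜ : Set V) := by grind
  have m12 : v12 ∈ ({u}ᶜ : Set V) := by grind
  have m1 : v1 ∈ ({u}ᶜ : Set V) := by grind
  have m3 : v3 ∈ ({u}ᶜ : Set V) := by grind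
  have m4 : v4 ∈ ({u}ᶜ : Set V) := by grind
  have adj1 : ∀ w, G.Adj u1 w ↔ w ∈ ({u6, u, u2, v12, v1, v2} : Set V) := fun w => by
    rw [← hN1]; rfl
  have adj2 : ∀ w, G.Adj u2 w ↔ w ∈ ({u1, u, u3, v2, v3, v4} : Set V) := fun w => by
    rw [← hN2]; rfl
  have N1 : (G.induce ({u}ᶜ : Set V)).neighborSet ⟨u1, h1⟩ =
      {⟨u6, h6⟩, ⟨u2, h2⟩, ⟨v12, m12⟩, ⟨v1, m1⟩, ⟨v2, m2⟩} := by
    ext ⟨w, hw⟩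
    have hwu : w ≠ u := hw
    simp [adj1, hwu]
  have N2 : (G.induce ({u}ᶜ : Set V)).neighborSet ⟨u2, h2⟩ =
      {⟨u1, h1⟩, ⟨u3, h3⟩, ⟨v3, m3⟩, ⟨v4, m4⟩, ⟨v2, m2⟩} := by
    ext ⟨w, hw⟩
    have hwu : w ≠ u := hw
    simp only [SimpleGraph.mem_neighborSet, SimpleGraph.comap_adj, Function.Embedding.subtype_apply,
      adj2, Set.mem_insert_iff, Set.mem_singleton_iff, Subtype.mk.injEq, hwu, false_or]
    clear * -
    tauto
  have p1 : c ⟨u1, h1⟩ ≠ c ⟨v2, m2⟩ := hodd.1 (by simp [adj1])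
  have p2 : c ⟨u2, h2⟩ ≠ c ⟨v2, m2⟩ := hodd.1 (by simp [adj2])
  have q1 := color_mem_of_five_neighbors _ c _ _ _ _ _ _ N1 (by simp; grind) o1 ho1
  have q2 := color_mem_of_five_neighbors _ c _ _ _ _ _ _ N2 (by simp; grind) o2 ho2
  rw [Set.ncard_le_one]
  rintro a ⟨ha, ha'⟩ b ⟨hb, hb'⟩
  simp only [Set.mem_insert_iff, Set.mem_singleton_iff, not_or] at ha ha' hb hb'
  by_contra hab
  grind
end

section
/- Assume the finite simple graph G contains the Figure-1 configuration. Let G' be the graph obtained from G − u by adding three new vertices x_1, x_2, x_3 and the six edges u_1x_1, x_1u_3, u_1x_2, x_2u_4, u_1x_3, x_3u_5. If G' admits an odd 9-coloring, then G admits an odd 9-coloring. -/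
/-- The graph obtained from `G − u` by adding three new vertices `x₁, x₂, x₃`
(the `Fin 3` part) and the six edges `u₁x₁, x₁u₃, u₁x₂, x₂u₄, u₁x₃, x₃u₅`. -/
def fig1ReducedGraph {V : Type*} (G : SimpleGraph V) (u u1 u3 u4 u5 : V) :
    SimpleGraph ((({u}ᶜ : Set V)) ⊕ Fin 3) :=
  SimpleGraph.fromRel (fun a b =>
    match a, b with
    | Sum.inl x, Sum.inl y => G.Adj x y
    | Sum.inl x, Sum.inr i =>
        (i = 0 ∧ ((x : V) = u1 ∨ (x : V) = u3)) ∨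
        (i = 1 ∧ ((x : V) = u1 ∨ (x : V) = u4)) ∨
        (i = 2 ∧ ((x : V) = u1 ∨ (x : V) = u5))
    | _, _ => False)

/-! ### Finite check on patterns of forbidden colors -/

/-- `CondA` on codes: `c` is the code of the recolored vertex, `l` and `r` those of its two
cycle neighbors, `x, y, z` the three remaining ones. -/
def chkA (l c r x y z : ℕ) : Bool :=
  !Nat.beq c 0 && !Nat.beq l 0 && !Nat.beq r 0 &&
    ((Nat.ble 2 l && !Nat.beq l c && !Nat.beq l x && !Nat.beq l y && !Nat.beq l z) ||
     (Nat.ble 2 r && !Nat.beq r c && !Nat.beq r x && !Nat.beq r y && !Nat.beq r z))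

/-- `CondB` on codes, with the arguments in the same order as for `chkA`. -/
def chkB (l c r x y z : ℕ) : Bool :=
  !Nat.beq c 0 && !Nat.beq c 1 && !Nat.beq x 1 && !Nat.beq y 1 && !Nat.beq z 1 &&
    (Nat.beq l 0 || Nat.beq r 0 || Nat.beq l c || Nat.beq r c)

/-- `CondC` on codes. -/
def chkC (a b c d e f : ℕ) : Bool :=
  Nat.beq a d && Nat.beq b e && Nat.beq c f && Nat.ble 2 a && Nat.ble 2 b && Nat.ble 2 c &&
    !Nat.beq a b && !Nat.beq b c && !Nat.beq a c

/-- The code `y` does not occur among the six codes. -/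
def misses (a b c d e f y : ℕ) : Bool :=
  !(Nat.beq a y || Nat.beq b y || Nat.beq c y || Nat.beq d y || Nat.beq e y || Nat.beq f y)

/-- `chkA` holds at some position of the six-cycle. -/
def someA (a b c d e f : ℕ) : Bool :=
  chkA a b c d e f || chkA b c d e f a || chkA c d e f a b || chkA d e f a b c ||
    chkA e f a b c d || chkA f a b c d e

/-- `chkB` holds at some position of the six-cycle. -/
def someB (a b c d e f : ℕ) : Bool :=
  chkB a b c d e f || chkB b c d e f a || chkB c d e f a b || chkB d e f a b c ||
    chkB e f a b c d || chkB f a b c d e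

/-- `chkB` holds at every position of the six-cycle whose code is nonzero. -/
def allB (a b c d e f : ℕ) : Bool :=
  (Nat.beq b 0 || chkB a b c d e f) && (Nat.beq c 0 || chkB b c d e f a) &&
    (Nat.beq d 0 || chkB c d e f a b) && (Nat.beq e 0 || chkB d e f a b c) &&
    (Nat.beq f 0 || chkB e f a b c d) && (Nat.beq a 0 || chkB f a b c d e)

/-- With three free colors (codes `2, 3, 4`), all of them forbidden somewhere, one of the moves
A, B, C applies. -/
def chk3 (a b c d e f : ℕ) : Bool :=
  someA a b c d e f || misses a b c d e f 2 || misses a b c d e f 3 || misses a b c d e f 4 ||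
    someB a b c d e f || chkC a b c d e f

/-- With four free colors (codes `2, …, 5`), all of them forbidden somewhere, move A applies
somewhere or move B applies wherever a color is forbidden. -/
def chk4 (a b c d e f : ℕ) : Bool :=
  someA a b c d e f || misses a b c d e f 2 || misses a b c d e f 3 || misses a b c d e f 4 ||
    misses a b c d e f 5 || allB a b c d e f

/-- `p k` holds for all `k < n`, written with the recursor so that the kernel evaluates it fast. -/
def allLt (n : ℕ) (p : ℕ → Bool) : Bool := n.rec true (fun k r => p k && r)

/-- `p` holds for all six-tuples of numbers below `n`. -/
def allSix (n : ℕ) (p : ℕ → ℕ → ℕ → ℕ → ℕ → ℕ → Bool) : Bool :=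
  allLt n fun a => allLt n fun b => allLt n fun c => allLt n fun d => allLt n fun e =>
    allLt n fun f => p a b c d e f

theorem allLt_spec {n : ℕ} {p : ℕ → Bool} (h : allLt n p = true) {k : ℕ} (hk : k < n) :
    p k = true := by
  induction n with
  | zero => omega
  | succ m ih =>
    have h' : (p m && allLt m p) = true := h
    rw [Bool.and_eq_true] at h'
    rcases Nat.lt_succ_iff_lt_or_eq.mp hk with hk | rfl
    · exact ih h'.2 hk
    · exact h'.1

theorem allSix_spec {n : ℕ} {p : ℕ → ℕ → ℕ → ℕ → ℕ → ℕ → Bool} (h : allSix n p = true)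
    {a b c d e f : ℕ} (ha : a < n) (hb : b < n) (hc : c < n) (hd : d < n) (he : e < n)
    (hf : f < n) : p a b c d e f = true :=
  allLt_spec (allLt_spec (allLt_spec (allLt_spec (allLt_spec (allLt_spec h ha) hb) hc) hd) he) hf

theorem allSix_chk3 : allSix 5 chk3 = true := by decide +kernel

theorem allSix_chk4 : allSix 6 chk4 = true := by decide +kernel

/-! ### Which recoloring move is available -/

/-- The nine colors. -/
abbrev Col := Fin 9

/-- Move A: recolor `uᵢ` and give `u` a free color `y` that is forbidden only by cycle neighbors
of `uᵢ`; all of `uᵢ` and its two cycle neighbors are required to forbid a color.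
Here and below `f j` is the color of `u` forbidden by `uⱼ`, if any, and `F` is the set of
free colors, i.e. those not used on the six-cycle. -/
def CondA (f : Fin 6 → Option Col) (F : Finset Col) (i : Fin 6) : Prop :=
  f i ≠ none ∧ f (i + 1) ≠ none ∧ f (i - 1) ≠ none ∧
    ∃ y ∈ F, (f (i + 1) = some y ∨ f (i - 1) = some y) ∧
      ∀ j, j ≠ i + 1 → j ≠ i - 1 → f j ≠ some y

/-- Move B: recolor `uᵢ` and give `u` the old color of `uᵢ`. No `uⱼ` other than the two cycle
neighbors of `uᵢ` forbids a color outside `F`, and the last clause leaves at most one forbidden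
color to be avoided by the new color of `uᵢ`. -/
def CondB (f : Fin 6 → Option Col) (F : Finset Col) (i : Fin 6) : Prop :=
  f i ≠ none ∧ (∀ j, j ≠ i + 1 → j ≠ i - 1 → ∀ y, f j = some y → y ∈ F) ∧
    (f (i + 1) = none ∨ f (i - 1) = none ∨ f (i + 1) = f i ∨ f (i - 1) = f i)

/-- Move C: the forbidden colors form the pattern `a, b, g, a, b, g`; both `u₁` and `u₃` are
recolored with `b`, and `u` takes the old color of `u₁`. -/
def CondC (f : Fin 6 → Option Col) (F : Finset Col) : Prop :=
  ∃ a ∈ F, ∃ b ∈ F, ∃ g ∈ F, a ≠ b ∧ b ≠ g ∧ a ≠ g ∧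
    f 0 = some a ∧ f 1 = some b ∧ f 2 = some g ∧ f 3 = some a ∧ f 4 = some b ∧ f 5 = some g

/-- A coding of the forbidden colors by natural numbers: `0` for none, `1` for a color outside
`F`, and `2, …, |F| + 1` bijectively for the elements of `F`. -/
structure IsCode (F : Finset Col) (code : Option Col → ℕ) : Prop where
  lt : ∀ o, code o < F.card + 2
  none : code none = 0
  one : ∀ y, y ∉ F → code (some y) = 1
  two : ∀ y ∈ F, 2 ≤ code (some y)
  inj : ∀ y ∈ F, ∀ z ∈ F, code (some y) = code (some z) → y = z
  surj : ∀ k, 2 ≤ k → k < F.card + 2 → ∃ y ∈ F, code (some y) = k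

theorem exists_code (F : Finset Col) : ∃ code, IsCode F code := by
  let e := F.equivFin
  refine ⟨fun o => match o with
    | Option.none => 0
    | some y => if h : y ∈ F then (e ⟨y, h⟩).val + 2 else 1, ?_, rfl, ?_, ?_, ?_, ?_⟩
  · rintro (_ | y)
    · simp
    · by_cases h : y ∈ F
      · simp only [h, dite_true]; have := (e ⟨y, h⟩).isLt; omega
      · simp [h]
  · intro y h; simp [h]
  · intro y h; simp [h]
  · intro y hy z hz h
    simp only [hy, hz, dite_true] at h
    have : e ⟨y, hy⟩ = e ⟨z, hz⟩ := Fin.ext (by omega)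
    simpa using e.injective this
  · intro k h2 hk
    refine ⟨(e.symm ⟨k - 2, by omega⟩).1, (e.symm ⟨k - 2, by omega⟩).2, ?_⟩
    simp
    omega

section code
variable {F : Finset Col} {code : Option Col → ℕ} {f : Fin 6 → Option Col}

theorem IsCode.eq_none (hc : IsCode F code) {o : Option Col} : code o = 0 ↔ o = Option.none := by
  rcases o with _ | y
  · simp [hc.none]
  · by_cases h : y ∈ F
    · have := hc.two y h; simp; omega
    · have := hc.one y h; simp; omega

theorem IsCode.mem (hc : IsCode F code) {y : Col} (h : code (some y) ≠ 1) : y ∈ F := by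
  by_contra h'; exact h (hc.one y h')

theorem IsCode.two_le (hc : IsCode F code) {o : Option Col} (h : 2 ≤ code o) :
    ∃ y ∈ F, o = some y := by
  rcases o with _ | y
  · simp [hc.none] at h
  · exact ⟨y, hc.mem (by omega), rfl⟩

theorem IsCode.eq (hc : IsCode F code) {o o' : Option Col} (h : code o = code o')
    (h1 : code o ≠ 1) : o = o' := by
  rcases o with _ | y
  · rw [hc.none] at h; exact (hc.eq_none.mp h.symm).symm
  · rcases o' with _ | z
    · rw [hc.none] at h; exact hc.eq_none.mp h
    · rw [hc.inj y (hc.mem h1) z (hc.mem (h ▸ h1)) h]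

theorem six_cases (i j : Fin 6) : j = i - 1 ∨ j = i ∨ j = i + 1 ∨ j = i + 2 ∨ j = i + 3 ∨ j = i + 4 := by
  revert i j; decide

theorem condA_of_chkA (hc : IsCode F code) (i : Fin 6)
    (h : chkA (code (f (i - 1))) (code (f i)) (code (f (i + 1))) (code (f (i + 2)))
      (code (f (i + 3))) (code (f (i + 4))) = true) : CondA f F i := by
  simp only [chkA, Bool.and_eq_true, Bool.or_eq_true, Bool.not_eq_true', Nat.beq_eq,
    Nat.ble_eq, ← Bool.not_eq_true, and_assoc] at h
  obtain ⟨h1, h2, h3, h⟩ := h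
  refine ⟨fun e => h1 (hc.eq_none.mpr e), fun e => h3 (hc.eq_none.mpr e),
    fun e => h2 (hc.eq_none.mpr e), ?_⟩
  rcases h with ⟨h4, h5, h6, h7, h8⟩ | ⟨h4, h5, h6, h7, h8⟩
  · obtain ⟨y, hy, e⟩ := hc.two_le h4
    refine ⟨y, hy, Or.inr e, fun j hj hj' ej => ?_⟩
    rw [e, ← ej] at h5 h6 h7 h8
    rcases six_cases i j with r | r | r | r | r | r <;> subst r <;> simp_all
  · obtain ⟨y, hy, e⟩ := hc.two_le h4
    refine ⟨y, hy, Or.inl e, fun j hj hj' ej => ?_⟩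
    rw [e, ← ej] at h5 h6 h7 h8
    rcases six_cases i j with r | r | r | r | r | r <;> subst r <;> simp_all

theorem condB_of_chkB (hc : IsCode F code) (i : Fin 6)
    (h : chkB (code (f (i - 1))) (code (f i)) (code (f (i + 1))) (code (f (i + 2)))
      (code (f (i + 3))) (code (f (i + 4))) = true) : CondB f F i := by
  simp only [chkB, Bool.and_eq_true, Bool.or_eq_true, Bool.not_eq_true', Nat.beq_eq,
    ← Bool.not_eq_true, and_assoc, or_assoc] at h
  obtain ⟨h1, h2, h3, h4, h5, h⟩ := h
  refine ⟨fun e => h1 (hc.eq_none.mpr e), fun j hj hj' y e => hc.mem ?_, ?_⟩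
  · rw [← e]
    rcases six_cases i j with r | r | r | r | r | r <;> subst r <;> first | assumption | simp_all
  · rcases h with h | h | h | h
    · exact Or.inr (Or.inl (hc.eq_none.mp h))
    · exact Or.inl (hc.eq_none.mp h)
    · exact Or.inr (Or.inr (Or.inr (hc.eq h.symm h2).symm))
    · exact Or.inr (Or.inr (Or.inl (hc.eq h.symm h2).symm))

theorem condC_of_chkC (hc : IsCode F code)
    (h : chkC (code (f 0)) (code (f 1)) (code (f 2)) (code (f 3))
      (code (f 4)) (code (f 5)) = true) : CondC f F := by
  simp only [chkC, Bool.and_eq_true, Bool.not_eq_true', Nat.beq_eq,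
    Nat.ble_eq, ← Bool.not_eq_true, and_assoc] at h
  obtain ⟨h1, h2, h3, h4, h5, h6, h7, h8, h9⟩ := h
  obtain ⟨a, ha, ea⟩ := hc.two_le h4
  obtain ⟨b, hb, eb⟩ := hc.two_le h5
  obtain ⟨g, hg, eg⟩ := hc.two_le h6
  refine ⟨a, ha, b, hb, g, hg, ?_, ?_, ?_, ea, eb, eg, ?_, ?_, ?_⟩
  · rintro rfl; exact h7 (by rw [ea, eb])
  · rintro rfl; exact h8 (by rw [eb, eg])
  · rintro rfl; exact h9 (by rw [ea, eg])
  · rw [← ea]; exact (hc.eq h1 (by omega)).symm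
  · rw [← eb]; exact (hc.eq h2 (by omega)).symm
  · rw [← eg]; exact (hc.eq h3 (by omega)).symm

theorem condA_of_someA (hc : IsCode F code)
    (h : someA (code (f 0)) (code (f 1)) (code (f 2)) (code (f 3))
      (code (f 4)) (code (f 5)) = true) : ∃ i, CondA f F i := by
  simp only [someA, Bool.or_eq_true, or_assoc] at h
  rcases h with h | h | h | h | h | h
  exacts [⟨1, condA_of_chkA hc 1 h⟩, ⟨2, condA_of_chkA hc 2 h⟩, ⟨3, condA_of_chkA hc 3 h⟩,
    ⟨4, condA_of_chkA hc 4 h⟩, ⟨5, condA_of_chkA hc 5 h⟩, ⟨0, condA_of_chkA hc 0 h⟩]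

theorem condB_of_someB (hc : IsCode F code)
    (h : someB (code (f 0)) (code (f 1)) (code (f 2)) (code (f 3))
      (code (f 4)) (code (f 5)) = true) : ∃ i, CondB f F i := by
  simp only [someB, Bool.or_eq_true, or_assoc] at h
  rcases h with h | h | h | h | h | h
  exacts [⟨1, condB_of_chkB hc 1 h⟩, ⟨2, condB_of_chkB hc 2 h⟩, ⟨3, condB_of_chkB hc 3 h⟩,
    ⟨4, condB_of_chkB hc 4 h⟩, ⟨5, condB_of_chkB hc 5 h⟩, ⟨0, condB_of_chkB hc 0 h⟩]

theorem condB_of_allB (hc : IsCode F code)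
    (h : allB (code (f 0)) (code (f 1)) (code (f 2)) (code (f 3))
      (code (f 4)) (code (f 5)) = true) (i : Fin 6) (hi : f i ≠ none) : CondB f F i := by
  simp only [allB, Bool.or_eq_true, Bool.and_eq_true, and_assoc, Nat.beq_eq] at h
  obtain ⟨h1, h2, h3, h4, h5, h0⟩ := h
  have hi' : code (f i) ≠ 0 := fun e => hi (hc.eq_none.mp e)
  fin_cases i
  exacts [condB_of_chkB hc 0 (h0.resolve_left hi'), condB_of_chkB hc 1 (h1.resolve_left hi'),
    condB_of_chkB hc 2 (h2.resolve_left hi'), condB_of_chkB hc 3 (h3.resolve_left hi'),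
    condB_of_chkB hc 4 (h4.resolve_left hi'), condB_of_chkB hc 5 (h5.resolve_left hi')]

theorem not_misses (hc : IsCode F code) (hF : ∀ y ∈ F, ∃ i, f i = some y) (k : ℕ) (h2 : 2 ≤ k)
    (hk : k < F.card + 2) : ¬ misses (code (f 0)) (code (f 1)) (code (f 2)) (code (f 3))
      (code (f 4)) (code (f 5)) k = true := by
  obtain ⟨y, hy, e⟩ := hc.surj k h2 hk
  obtain ⟨i, hi⟩ := hF y hy
  rw [← hi] at e
  simp only [misses, Bool.not_eq_true', Bool.or_eq_true, Nat.beq_eq, ← Bool.not_eq_true, not_not, or_assoc]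
  fin_cases i <;> simp_all

end code

theorem three_free {f : Fin 6 → Option Col} {F : Finset Col} (h3 : F.card = 3)
    (hF : ∀ y ∈ F, ∃ i, f i = some y) :
    (∃ i, CondA f F i) ∨ (∃ i, CondB f F i) ∨ CondC f F := by
  obtain ⟨code, hc⟩ := exists_code F
  have lt : ∀ i, code (f i) < 5 := fun i => by have := hc.lt (f i); omega
  have h := allSix_spec allSix_chk3 (lt 0) (lt 1) (lt 2) (lt 3) (lt 4) (lt 5)
  have m := not_misses hc hF
  have m2 := m 2 (by omega) (by omega)
  have m3 := m 3 (by omega) (by omega)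
  have m4 := m 4 (by omega) (by omega)
  simp only [chk3, Bool.or_eq_true, m2, m3, m4, Bool.false_eq_true, or_assoc, false_or] at h
  rcases h with h | h | h
  · exact Or.inl (condA_of_someA hc h)
  · exact Or.inr (Or.inl (condB_of_someB hc h))
  · exact Or.inr (Or.inr (condC_of_chkC hc h))

theorem four_free {f : Fin 6 → Option Col} {F : Finset Col} (h3 : F.card = 4)
    (hF : ∀ y ∈ F, ∃ i, f i = some y) :
    (∃ i, CondA f F i) ∨ ∀ i, f i ≠ none → CondB f F i := by
  obtain ⟨code, hc⟩ := exists_code F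
  have lt : ∀ i, code (f i) < 6 := fun i => by have := hc.lt (f i); omega
  have h := allSix_spec allSix_chk4 (lt 0) (lt 1) (lt 2) (lt 3) (lt 4) (lt 5)
  have m := not_misses hc hF
  have m2 := m 2 (by omega) (by omega)
  have m3 := m 3 (by omega) (by omega)
  have m4 := m 4 (by omega) (by omega)
  have m5 := m 5 (by omega) (by omega)
  simp only [chk4, Bool.or_eq_true, m2, m3, m4, m5, Bool.false_eq_true, or_assoc, false_or] at h
  rcases h with h | h
  · exact Or.inl (condA_of_someA hc h)
  · exact Or.inr (condB_of_allB hc h)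

/-- With at least five free colors, all forbidden somewhere, move A applies at `i` as soon as `i`
and its two neighbors forbid free colors: otherwise the four other indices would already forbid
all the free colors. -/
theorem five_free {f : Fin 6 → Option Col} {F : Finset Col} (h5 : 5 ≤ F.card)
    (hF : ∀ y ∈ F, ∃ i, f i = some y) (i : Fin 6)
    (h0 : ∃ y ∈ F, f i = some y) (h1 : ∃ y ∈ F, f (i + 1) = some y)
    (h2 : ∃ y ∈ F, f (i - 1) = some y) : CondA f F i := by
  obtain ⟨a, ha, ea⟩ := h0
  obtain ⟨b, hb, eb⟩ := h1
  obtain ⟨g, hg, eg⟩ := h2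
  refine ⟨by simp [ea], by simp [eb], by simp [eg], ?_⟩
  by_contra hcon
  push Not at hcon
  obtain ⟨j, hj1, hj2, ej⟩ := hcon b hb (Or.inl eb)
  obtain ⟨k, hk1, hk2, ek⟩ := hcon g hg (Or.inr eg)
  let T : Finset (Fin 6) := {t | t ≠ i + 1 ∧ t ≠ i - 1}
  have hT : T.card = 4 := by
    simp only [T]; clear * -; revert i; decide
  have hsub : F.image some ⊆ T.image f := by
    intro o ho
    obtain ⟨y, hy, rfl⟩ := Finset.mem_image.mp ho
    obtain ⟨t, ht⟩ := hF y hy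
    rw [Finset.mem_image]
    by_cases t1 : t = i + 1
    · exact ⟨j, by simp [T, hj1, hj2], by rw [ej, ← ht, t1, eb]⟩
    by_cases t2 : t = i - 1
    · exact ⟨k, by simp [T, hk1, hk2], by rw [ek, ← ht, t2, eg]⟩
    exact ⟨t, by simp [T, t1, t2], ht⟩
  have := Finset.card_le_card hsub
  rw [Finset.card_image_of_injective _ (Option.some_injective _)] at this
  have := Finset.card_image_le (s := T) (f := f)
  omega

/-! ### Parity vectors and counting -/

/-- The unit vector of a color; sums of such vectors over `ZMod 2` record color parities. -/
def ev (a : Col) : Col → ZMod 2 := Pi.single a 1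

theorem ev_self (a : Col) : ev a a = 1 := by simp [ev]

theorem ev_ne {a b : Col} (h : b ≠ a) : ev a b = 0 := by simp [ev, h]

theorem ev_add_self (a : Col) : ev a + ev a = 0 := by
  ext b; simp [CharTwo.add_self_eq_zero]

theorem ev_inj {a b : Col} (h : ev a = ev b) : a = b := by
  by_contra hne
  have := congrFun h a
  rw [ev_self, ev_ne hne] at this
  exact one_ne_zero this

section count
variable {n : ℕ} (c : Fin n → Col)

/-- The parity vector of a family of colors: the coordinate at `a` tells whether `a` occurs an
odd number of times. -/
def total : Col → ZMod 2 := ∑ i, ev (c i)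

theorem total_apply (a : Col) : total c a = ((Finset.univ.filter (c · = a)).card : ZMod 2) := by
  simp only [total, Finset.sum_apply, ev, Pi.single_apply, Finset.sum_boole]
  simp only [eq_comm]

/-- Every color that occurs an even number of times occurs at least twice. -/
theorem two_mul_even_le : 2 * ((Finset.univ.image c).filter (total c · = 0)).card ≤
    (Finset.univ.filter (fun i => total c (c i) = 0)).card := by
  rw [Finset.card_eq_sum_card_fiberwise (f := c)
    (t := (Finset.univ.image c).filter (total c · = 0)) (by intro i hi; simpa using hi),
    mul_comm, ← smul_eq_mul]
  apply Finset.card_nsmul_le_sum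
  intro a ha
  simp only [Finset.mem_filter, Finset.mem_image, Finset.mem_univ, true_and] at ha
  obtain ⟨⟨i, rfl⟩, h0⟩ := ha
  have hfib : (Finset.univ.filter (fun i => total c (c i) = 0)).filter (c · = c i)
      = Finset.univ.filter (c · = c i) := by
    ext j
    simp only [Finset.mem_filter, Finset.mem_univ, true_and, and_iff_right_iff_imp]
    intro h; rw [h, h0]
  rw [hfib]
  rw [total_apply, ZMod.natCast_eq_zero_iff] at h0
  have : 0 < (Finset.univ.filter (c · = c i)).card :=
    Finset.card_pos.mpr ⟨i, by simp⟩
  exact Nat.le_of_dvd this h0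

theorem odd_le : ((Finset.univ.image c).filter (total c · ≠ 0)).card ≤
    (Finset.univ.filter (fun i => total c (c i) ≠ 0)).card := by
  refine (Finset.card_le_card ?_).trans (Finset.card_image_le (f := c))
  intro a ha
  simp only [Finset.mem_filter, Finset.mem_image, Finset.mem_univ, true_and] at ha ⊢
  obtain ⟨⟨i, rfl⟩, h0⟩ := ha
  exact ⟨i, h0, rfl⟩

theorem total_ne_of_card (h : 3 ≤ ((Finset.univ.image c).filter (total c · ≠ 0)).card)
    (a d : Col) : total c ≠ ev a + ev d := by
  intro e
  have hsub : (Finset.univ.image c).filter (total c · ≠ 0) ⊆ {a, d} := by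
    intro b hb
    have hb := (Finset.mem_filter.mp hb).2
    by_contra hn
    simp only [Finset.mem_insert, Finset.mem_singleton, not_or] at hn
    apply hb
    rw [e, Pi.add_apply, ev_ne hn.1, ev_ne hn.2, add_zero]
  have := (Finset.card_le_card hsub).trans Finset.card_le_two
  omega

theorem total_ne_of_even {a : Col} (h : total c ≠ 0) (ha : total c a = 0) (d : Col) :
    total c ≠ ev a + ev d := by
  intro e
  by_cases had : a = d
  · subst had; exact h (by rw [e, ev_add_self])
  · rw [e, Pi.add_apply, ev_self, ev_ne had, add_zero] at ha
    exact one_ne_zero ha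

end count

theorem exists_inner (S : Finset (Fin 6)) (h : 5 ≤ S.card) :
    ∃ i ∈ S, i + 1 ∈ S ∧ i - 1 ∈ S := by
  revert S; decide +kernel

theorem exists_inner_of_four (S N : Finset (Fin 6)) (h : 5 ≤ S.card) (hN : 4 ≤ N.card) :
    ∃ i ∈ N, i ∈ S ∧ i + 1 ∈ S ∧ i - 1 ∈ S := by
  revert S N; decide +kernel

/-- If six positions carry five colors, exactly one color is repeated, and it occupies only two
positions; so any four positions include one whose color is not repeated. -/
theorem unique_of_card_five (c : Fin 6 → Col) (h5 : (Finset.univ.image c).card = 5)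
    (J : Finset (Fin 6)) (hJ : 4 ≤ J.card) : ∃ i ∈ J, ∀ j, j ≠ i → c j ≠ c i := by
  by_contra hcon
  push Not at hcon
  obtain ⟨i1, h1⟩ : J.Nonempty := Finset.card_pos.mp (by omega)
  obtain ⟨j1, hj1, e1⟩ := hcon i1 h1
  have hinj : Set.InjOn c (Finset.univ.erase i1 : Finset (Fin 6)) := by
    rw [← Finset.card_image_iff]
    have : (Finset.univ.erase i1).image c = Finset.univ.image c := by
      ext a
      simp only [Finset.mem_image, Finset.mem_erase, Finset.mem_univ, and_true, true_and]
      constructor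
      · rintro ⟨t, -, ht⟩; exact ⟨t, ht⟩
      · rintro ⟨t, ht⟩
        by_cases hti : t = i1
        · exact ⟨j1, hj1, by rw [e1, ← hti, ht]⟩
        · exact ⟨t, hti, ht⟩
    rw [this, h5]; simp
  have key : ∀ i ∈ J, i ≠ i1 → c i = c i1 := by
    intro i hi hne
    obtain ⟨j, hj, e⟩ := hcon i hi
    by_cases hj1 : j = i1
    · rw [← e, hj1]
    · exact absurd (hinj (by simpa using hj1) (by simpa using hne) e) hj
  have h2 : 1 < (J.erase i1).card := by rw [Finset.card_erase_of_mem h1]; omega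
  obtain ⟨x, hx, y, hy, hxy⟩ := Finset.one_lt_card.mp h2
  rw [Finset.mem_erase] at hx hy
  exact hxy (hinj (by simpa using hx.1) (by simpa using hy.1)
    ((key x hx.2 hx.1).trans (key y hy.2 hy.1).symm))

/-- If every color is used on the six-cycle or forbidden, one of the moves A, B, C is available.
In moves A and B the index is moreover chosen so that no new color of `uᵢ` makes all parities
around `u` even. -/
theorem trichotomy (c : Fin 6 → Col) (f : Fin 6 → Option Col)
    (hH : ∀ x, (∃ i, c i = x) ∨ ∃ i, f i = some x) (hu : total c ≠ 0) :
    (∃ i, CondA f (Finset.univ.image c)ᶜ i ∧ ∀ d, total c ≠ ev (c i) + ev d) ∨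
    (∃ i, CondB f (Finset.univ.image c)ᶜ i ∧ (∀ j, j ≠ i → c j ≠ c i) ∧
      ∀ d, total c ≠ ev (c i) + ev d) ∨
    (CondC f (Finset.univ.image c)ᶜ ∧ Function.Injective c) := by
  set F := (Finset.univ.image c)ᶜ with hFdef
  have hF : ∀ y ∈ F, ∃ i, f i = some y := by
    intro y hy
    refine (hH y).resolve_left ?_
    simpa [hFdef] using hy
  have hcard : F.card + (Finset.univ.image c).card = 9 := by
    rw [hFdef, add_comm, Finset.card_add_card_compl]; rfl
  have hm6 : (Finset.univ.image c).card ≤ 6 := by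
    simpa using Finset.card_image_le (s := Finset.univ) (f := c)
  have hE := two_mul_even_le c
  have hO := odd_le c
  have hEO := Finset.card_filter_add_card_filter_not (s := Finset.univ.image c) (total c · = 0)
  have hN := Finset.card_filter_add_card_filter_not (s := (Finset.univ : Finset (Fin 6)))
    (fun i => total c (c i) = 0)
  rw [Finset.card_univ, Fintype.card_fin] at hN
  set E := ((Finset.univ.image c).filter (total c · = 0)).card
  set D := ((Finset.univ.image c).filter (total c · ≠ 0)).card with hD
  set N := Finset.univ.filter (fun i => total c (c i) = 0) with hNdef
  change _ + (Finset.univ.filter (fun i => total c (c i) ≠ 0)).card = _ at hN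
  change _ + D = _ at hEO
  -- the indices whose forbidden color is free
  let S : Finset (Fin 6) := Finset.univ.filter (fun i => ∃ y ∈ F, f i = some y)
  have hS : F.card ≤ S.card := by
    rw [← Finset.card_image_of_injective F (Option.some_injective _)]
    refine (Finset.card_le_card ?_).trans (Finset.card_image_le (f := f))
    intro o ho
    obtain ⟨y, hy, rfl⟩ := Finset.mem_image.mp ho
    obtain ⟨i, hi⟩ := hF y hy
    exact Finset.mem_image.mpr ⟨i, by simp [S, hi, hy], hi⟩
  have hS6 : S.card ≤ 6 := by simpa using Finset.card_le_univ S
  have hmem : ∀ i, i ∈ S → ∃ y ∈ F, f i = some y := by intro i hi; simpa [S] using hi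
  by_cases h5 : 5 ≤ F.card
  · left
    by_cases hD3 : 3 ≤ D
    · obtain ⟨i, h0, h1, h2⟩ := exists_inner S (by omega)
      exact ⟨i, five_free h5 hF i (hmem _ h0) (hmem _ h1) (hmem _ h2),
        total_ne_of_card c hD3 _⟩
    · have : ∃ i ∈ N, i ∈ S ∧ i + 1 ∈ S ∧ i - 1 ∈ S := by
        by_cases h6 : S.card = 6
        · have hSu : S = Finset.univ := Finset.card_eq_iff_eq_univ S |>.mp (by simpa using h6)
          obtain ⟨i, hi⟩ : N.Nonempty := Finset.card_pos.mp (by omega)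
          exact ⟨i, hi, by simp [hSu]⟩
        · exact exists_inner_of_four S N (by omega) (by omega)
      obtain ⟨i, hi, h0, h1, h2⟩ := this
      exact ⟨i, five_free h5 hF i (hmem _ h0) (hmem _ h1) (hmem _ h2),
        total_ne_of_even c hu (by simpa [hNdef] using hi)⟩
  · have hD3 : 3 ≤ D := by omega
    have hne := total_ne_of_card c hD3
    by_cases h4 : F.card = 4
    · rcases four_free h4 hF with ⟨i, hi⟩ | hB
      · exact Or.inl ⟨i, hi, hne _⟩
      · obtain ⟨i, hi, hu⟩ := unique_of_card_five c (by omega) S (by omega)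
        obtain ⟨y, -, hy⟩ := hmem i hi
        exact Or.inr (Or.inl ⟨i, hB i (by simp [hy]), hu, hne _⟩)
    · have hinj : Function.Injective c := by
        have : (Finset.univ.image c).card = (Finset.univ : Finset (Fin 6)).card := by
          rw [Finset.card_univ, Fintype.card_fin]; omega
        rw [Finset.card_image_iff] at this
        simpa using this
      rcases three_free (by omega) hF with ⟨i, hi⟩ | ⟨i, hi⟩ | hC
      · exact Or.inl ⟨i, hi, hne _⟩
      · exact Or.inr (Or.inl ⟨i, hi, fun j hj e => hj (hinj e), hne _⟩)
      · exact Or.inr (Or.inr ⟨hC, hinj⟩)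

/-- There are new colors `c'` of the six-cycle and a color `x` for the hub such that all parity
conditions at the hub and at the `uᵢ` hold and `x` is not used on the six-cycle.
`q i` is the parity vector of the outer neighbors of
`uᵢ`; changed positions take colors from the lists `L`, and no two cyclically adjacent positions
are changed. -/
def HasRecoloring (c : Fin 6 → Col) (q : Fin 6 → Col → ZMod 2) (L : Fin 6 → Finset Col) : Prop :=
  ∃ (c' : Fin 6 → Col) (x : Col), (∀ i, c' i ≠ x) ∧ total c' ≠ 0 ∧
    (∀ i, q i + ev (c' (i - 1)) + ev (c' (i + 1)) + ev x ≠ 0) ∧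
    ∀ i, c' i ≠ c i → c' i ∈ L i ∧ c' (i - 1) = c (i - 1) ∧ c' (i + 1) = c (i + 1)

/-- The coloring of the six-cycle can be repaired and extended to the hub, provided each vertex
that forbids a color `a` for the hub has a list of at least two alternative colors, none of them
`a` or its own color. -/
theorem local_recoloring (c : Fin 6 → Col) (q : Fin 6 → Col → ZMod 2) (L : Fin 6 → Finset Col)
    (hu : total c ≠ 0) (hLc : ∀ i, c i ∉ L i)
    (hL : ∀ i a, q i + ev (c (i - 1)) + ev (c (i + 1)) = ev a → 2 ≤ (L i).card ∧ a ∉ L i) :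
    HasRecoloring c q L := by
  classical
  set p : Fin 6 → Col → ZMod 2 := fun i => q i + ev (c (i - 1)) + ev (c (i + 1)) with hp
  obtain ⟨f, hf⟩ : ∃ f : Fin 6 → Option Col, ∀ i a, f i = some a ↔ p i = ev a := by
    refine ⟨fun i => if h : ∃ a, p i = ev a then some h.choose else none, fun i a => ?_⟩
    by_cases h : ∃ a, p i = ev a
    · simp only [h, dite_true, Option.some.injEq]
      constructor
      · rintro rfl; exact h.choose_spec
      · intro ha; exact ev_inj (h.choose_spec.symm.trans ha)
    · simp only [h, dite_false]
      constructor
      · intro h'; cases h'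
      · intro ha; exact absurd ⟨a, ha⟩ h
  have add_eq : ∀ s t : Col → ZMod 2, s + t = 0 → s = t := by
    intro s t h; rw [← sub_eq_zero, CharTwo.sub_eq_add]; exact h
  have hne_of : ∀ i x, f i ≠ some x → p i + ev x ≠ 0 := by
    intro i x h h'; exact h ((hf i x).mpr (add_eq _ _ h'))
  by_cases hH : ∀ x, (∃ i, c i = x) ∨ ∃ i, f i = some x
  swap
  · push Not at hH
    obtain ⟨x, h1, h2⟩ := hH
    exact ⟨c, x, h1, hu, fun i => hne_of i x (h2 i), fun i h => absurd rfl h⟩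
  have hL2 : ∀ i a, f i = some a → 2 ≤ (L i).card ∧ a ∉ L i :=
    fun i a h => hL i a ((hf i a).mp h)
  have pick : ∀ i, f i ≠ none → ∀ y, ∃ d ∈ L i, d ≠ y := by
    intro i hi y
    obtain ⟨a, ha⟩ := Option.ne_none_iff_exists'.mp hi
    obtain ⟨d, hd, hdy⟩ := Finset.exists_mem_ne (s := L i) (hL2 i a ha).1 y
    exact ⟨d, hd, hdy⟩
  -- effect of a single recoloring
  have i1 : ∀ i : Fin 6, i + 1 ≠ i := by decide
  have i2 : ∀ i : Fin 6, i - 1 ≠ i := by decide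
  have single : ∀ (i : Fin 6) (d x : Col), d ∈ L i → (∀ j, j ≠ i → c j ≠ x) → d ≠ x →
      (∀ d, total c ≠ ev (c i) + ev d) →
      (∀ j, j ≠ i + 1 → j ≠ i - 1 → f j ≠ some x) →
      (∀ j, j = i + 1 ∨ j = i - 1 → p j + ev (c i) + ev d + ev x ≠ 0) →
      HasRecoloring c q L := by
    intro i d x hd hcx hdx htot hfar hnear
    refine ⟨Function.update c i d, x, ?_, ?_, ?_, ?_⟩
    · intro j
      by_cases hj : j = i
      · subst hj; simpa using hdx
      · simpa [hj] using hcx j hj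
    · intro h0
      apply htot d
      apply add_eq
      have : total (Function.update c i d) = total c + (ev (c i) + ev d) := by
        simp only [total]
        rw [← Finset.add_sum_erase _ _ (Finset.mem_univ i),
          ← Finset.add_sum_erase (a := i) _ (fun j => ev (c j)) (Finset.mem_univ i)]
        have : ∑ j ∈ Finset.univ.erase i, ev (Function.update c i d j)
            = ∑ j ∈ Finset.univ.erase i, ev (c j) :=
          Finset.sum_congr rfl fun j hj => by simp [Finset.ne_of_mem_erase hj]
        rw [this]
        simp only [Function.update_self]
        linear_combination -ev_add_self (c i)
      rw [← this, h0]
    · intro j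
      by_cases hj1 : j = i + 1
      · subst hj1
        have h := hnear (i + 1) (Or.inl rfl)
        simp only [hp, add_sub_cancel_right] at h ⊢
        have hi2 : i + 1 + 1 ≠ i := by clear * -; revert i; decide
        rw [Function.update_self, Function.update_of_ne hi2]
        convert h using 1
        linear_combination -ev_add_self (c i)
      by_cases hj2 : j = i - 1
      · subst hj2
        have h := hnear (i - 1) (Or.inr rfl)
        simp only [hp, sub_add_cancel] at h ⊢
        have hi2 : i - 1 - 1 ≠ i := by clear * -; revert i; decide
        rw [Function.update_self, Function.update_of_ne hi2]
        convert h using 1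
        linear_combination -ev_add_self (c i)
      · have h := hne_of j x (hfar j hj1 hj2)
        have e1 : j - 1 ≠ i := fun e => hj1 (by rw [← e, sub_add_cancel])
        have e2 : j + 1 ≠ i := fun e => hj2 (by rw [← e, add_sub_cancel_right])
        rw [Function.update_of_ne e1, Function.update_of_ne e2]
        exact h
    · intro j hj
      have : j = i := by by_contra hji; exact hj (by simp [hji])
      subst this
      exact ⟨by simpa using hd, Function.update_of_ne (i2 _) _ _, Function.update_of_ne (i1 _) _ _⟩
  -- move B: if `u` takes the old color of `uᵢ`, then each cycle neighbor `uⱼ` of `uᵢ` has parity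
  -- vector `p j + ev d`, so `d` only has to avoid the forbidden colors of these neighbors
  have swapB : ∀ i, (∀ j, j ≠ i → c j ≠ c i) → (∀ d, total c ≠ ev (c i) + ev d) →
      (∀ j, j ≠ i + 1 → j ≠ i - 1 → f j ≠ some (c i)) →
      (∃ d ∈ L i, f (i + 1) ≠ some d ∧ f (i - 1) ≠ some d) →
      HasRecoloring c q L := by
    rintro i huniq htot hfar ⟨d, hd, hd1, hd2⟩
    refine single i d (c i) hd huniq (fun e => hLc i (e ▸ hd)) htot hfar ?_
    intro j hj h0
    have : f j ≠ some d := by rcases hj with rfl | rfl <;> assumption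
    apply hne_of j d this
    rw [← h0]
    linear_combination -ev_add_self (c i)
  rcases trichotomy c f hH hu with ⟨i, ⟨hi, hi1, hi2, y, hyF, hy, hfar⟩, htot⟩ |
    ⟨i, ⟨hi, hJ, hB⟩, huniq, htot⟩ | ⟨⟨a, ha, b, hb, g, hg, hab, hbg, hag, f0, f1, f2, f3, f4, f5⟩, hinj⟩
  · have hyc : ∀ j, c j ≠ y := by simpa using hyF
    obtain ⟨d, hd, hdy⟩ := pick i hi y
    have hdc : d ≠ c i := fun e => hLc i (e ▸ hd)
    refine single i d y hd (fun j _ => hyc j) hdy htot hfar ?_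
    intro j hj h0
    obtain ⟨z, hz⟩ : ∃ z, f j = some z := by
      rcases hj with rfl | rfl
      · exact Option.ne_none_iff_exists'.mp hi1
      · exact Option.ne_none_iff_exists'.mp hi2
    rw [(hf j z).mp hz] at h0
    -- `ev z + ev (c i) + ev d + ev y` cannot vanish, since `c i`, `d`, `y` are distinct
    have hzc : z = c i := by
      by_contra hzc
      have := congrFun h0 (c i)
      simp only [Pi.add_apply, ev_self, ev_ne (Ne.symm hzc), ev_ne hdc.symm, ev_ne (hyc i)] at this
      simp at this
    have := congrFun h0 d
    simp only [Pi.add_apply, ev_self, hzc, ev_ne hdc, ev_ne hdy] at this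
    simp at this
  · have hfar : ∀ j, j ≠ i + 1 → j ≠ i - 1 → f j ≠ some (c i) := by
      intro j h1 h2 h
      have := hJ j h1 h2 _ h
      simp at this
    refine swapB i huniq htot hfar ?_
    obtain ⟨a, ha⟩ := Option.ne_none_iff_exists'.mp hi
    have haL := (hL2 i a ha).2
    have sub : ∀ k, ∃ d ∈ L i, f k ≠ some d := by
      intro k
      rcases hk : f k with _ | y
      · obtain ⟨d, hd, -⟩ := pick i hi a
        exact ⟨d, hd, by simp⟩
      · obtain ⟨d, hd, hdy⟩ := pick i hi y
        exact ⟨d, hd, by simpa using hdy.symm⟩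
    have hnot : ∀ d ∈ L i, some a ≠ some d := by
      intro d hd e; rw [Option.some.injEq] at e; exact haL (e ▸ hd)
    rcases hB with h | h | h | h
    · obtain ⟨d, hd, h'⟩ := sub (i - 1); exact ⟨d, hd, by simp [h], h'⟩
    · obtain ⟨d, hd, h'⟩ := sub (i + 1); exact ⟨d, hd, h', by simp [h]⟩
    · obtain ⟨d, hd, h'⟩ := sub (i - 1); exact ⟨d, hd, by rw [h, ha]; exact hnot d hd, h'⟩
    · obtain ⟨d, hd, h'⟩ := sub (i + 1); exact ⟨d, hd, h', by rw [h, ha]; exact hnot d hd⟩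
  · have hac : ∀ j, c j ≠ a := by simpa using ha
    have hbc : ∀ j, c j ≠ b := by simpa using hb
    have hgc : ∀ j, c j ≠ g := by simpa using hg
    have htot1 : ∀ k, total c (c k) = 1 := by
      intro k
      rw [total_apply]
      have : Finset.univ.filter (c · = c k) = {k} := by
        ext j; simp [hinj.eq_iff]
      rw [this]; simp
    have htot : ∀ s t, total c ≠ ev s + ev t := by
      apply total_ne_of_card
      have : (Finset.univ.image c).filter (total c · ≠ 0) = Finset.univ.image c := by
        apply Finset.filter_true_of_mem
        intro s hs
        obtain ⟨k, -, rfl⟩ := Finset.mem_image.mp hs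
        rw [htot1]; exact one_ne_zero
      rw [this, Finset.card_image_of_injective _ hinj]; simp
    have hfc : ∀ i j, f j ≠ some (c i) := by
      intro i j
      fin_cases j <;> simp [f0, f1, f2, f3, f4, f5, (hac i).symm, (hbc i).symm, (hgc i).symm]
    -- if move B works neither at `0` nor at `2`, both lists contain `b`
    by_cases hB0 : ∃ d ∈ L 0, f (0 + 1) ≠ some d ∧ f (0 - 1) ≠ some d
    · exact swapB 0 (fun j hj e => hj (hinj e)) (htot _) (fun j _ _ => hfc 0 j) hB0
    by_cases hB2 : ∃ d ∈ L 2, f (2 + 1) ≠ some d ∧ f (2 - 1) ≠ some d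
    · exact swapB 2 (fun j hj e => hj (hinj e)) (htot _) (fun j _ _ => hfc 2 j) hB2
    push Not at hB0 hB2
    have f1' : f (0 + 1) = some b := f1
    have f5' : f (0 - 1) = some g := f5
    have f3' : f (2 + 1) = some a := f3
    have f1'' : f (2 - 1) = some b := f1
    have hb0 : b ∈ L 0 := by
      obtain ⟨d, hd, hdg⟩ := pick 0 (by simp [f0]) g
      have := hB0 d hd
      rw [f1', f5'] at this
      by_cases hbd : b = d
      · rwa [hbd]
      · exact absurd (Option.some.inj (this (by simpa using hbd))).symm hdg
    have hb2 : b ∈ L 2 := by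
      obtain ⟨d, hd, hda⟩ := pick 2 (by simp [f2]) a
      have := hB2 d hd
      rw [f3', f1''] at this
      have := Option.some.inj (this (by simpa using hda.symm))
      rwa [this]
    have p0 := (hf 0 a).mp f0
    have p1 := (hf 1 b).mp f1
    have p2 := (hf 2 g).mp f2
    have p3 := (hf 3 a).mp f3
    have p4 := (hf 4 b).mp f4
    have p5 := (hf 5 g).mp f5
    have c02 : c 0 ≠ c 2 := fun e => absurd (hinj e) (by decide)
    have c01 : c 0 ≠ c 1 := fun e => absurd (hinj e) (by decide)
    have c12 : c 1 ≠ c 2 := fun e => absurd (hinj e) (by decide)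
    refine ⟨![b, c 1, b, c 3, c 4, c 5], c 0, ?_, ?_, ?_, ?_⟩
    · intro i
      fin_cases i
      exacts [(hbc 0).symm, c01.symm, (hbc 0).symm, fun e => absurd (hinj e) (by decide),
        fun e => absurd (hinj e) (by decide), fun e => absurd (hinj e) (by decide)]
    · intro h0
      have h1 := htot1 1
      have hz : total c = ev (c 0) + ev (c 2) := by
        apply add_eq
        rw [← h0]
        simp only [total, Fin.sum_univ_six]
        simp only [Matrix.cons_val]
        linear_combination ev_add_self (c 0) + ev_add_self (c 2) - ev_add_self b
      exact htot _ _ hz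
    · intro i h0
      fin_cases i
      · have h0 : q 0 + ev (c 5) + ev (c 1) + ev (c 0) = 0 := h0
        have p0 : q 0 + ev (c 5) + ev (c 1) = ev a := p0
        rw [p0] at h0
        exact hac 0 (ev_inj (add_eq _ _ h0)).symm
      · have h0 : q 1 + ev b + ev b + ev (c 0) = 0 := h0
        have p1 : q 1 + ev (c 0) + ev (c 2) = ev b := p1
        have h1 : ev b + ev (c 2) = 0 := by
          linear_combination h0 - p1 - ev_add_self b + ev_add_self (c 2) 
        exact hbc 2 (ev_inj (add_eq _ _ h1)).symm
      · have h0 : q 2 + ev (c 1) + ev (c 3) + ev (c 0) = 0 := h0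
        have p2 : q 2 + ev (c 1) + ev (c 3) = ev g := p2
        rw [p2] at h0
        exact hgc 0 (ev_inj (add_eq _ _ h0)).symm
      · have h0 : q 3 + ev b + ev (c 4) + ev (c 0) = 0 := h0
        have p3 : q 3 + ev (c 2) + ev (c 4) = ev a := p3
        have h1 : ev a + ev (c 2) + ev b + ev (c 0) = 0 := by
          linear_combination h0 - p3 + ev_add_self (c 2)
        have := congrFun h1 a
        simp [ev_self, ev_ne hab, ev_ne (hac 2).symm, ev_ne (hac 0).symm] at this
      · have h0 : q 4 + ev (c 3) + ev (c 5) + ev (c 0) = 0 := h0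
        have p4 : q 4 + ev (c 3) + ev (c 5) = ev b := p4
        rw [p4] at h0
        exact hbc 0 (ev_inj (add_eq _ _ h0)).symm
      · have h0 : q 5 + ev (c 4) + ev b + ev (c 0) = 0 := h0
        have p5 : q 5 + ev (c 4) + ev (c 0) = ev g := p5
        have h1 : ev g + ev b = 0 := by
          linear_combination h0 - p5
        exact hbg (ev_inj (add_eq _ _ h1)).symm
    · intro i hi
      fin_cases i
      exacts [⟨hb0, rfl, rfl⟩, absurd rfl hi, ⟨hb2, rfl, rfl⟩, absurd rfl hi, absurd rfl hi,
        absurd rfl hi]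

/-! ### From colors of the six-cycle to the graph -/

/-- If five vertices show exactly one color `a` an odd number of times, they use at most three
colors, `a` among them. -/
theorem five_colors (p : Fin 5 → Col) (a : Col) (h : total p = ev a) :
    (Finset.univ.image p).card ≤ 3 ∧ ∃ i, p i = a := by
  have hex : ∃ i, p i = a := by
    by_contra hn
    push Not at hn
    have h1 := congrFun h a
    rw [total_apply, ev_self, Finset.filter_false_of_mem (fun i _ => hn i)] at h1
    simp at h1
  refine ⟨?_, hex⟩
  obtain ⟨i, hi⟩ := hex
  have hE := two_mul_even_le p
  have hne : ∀ b, total p b = 0 ↔ b ≠ a := by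
    intro b
    rw [h]
    by_cases hb : b = a
    · subst hb; simp [ev_self]
    · simp [ev_ne hb, hb]
  simp only [hne] at hE
  have h4 : (Finset.univ.filter (fun j => p j ≠ a)).card ≤ 4 := by
    have : Finset.univ.filter (fun j => p j ≠ a) ⊆ Finset.univ.erase i := by
      intro j hj
      simp only [Finset.mem_filter, Finset.mem_univ, true_and] at hj
      simp only [Finset.mem_erase, Finset.mem_univ, and_true]
      rintro rfl; exact hj hi
    simpa using Finset.card_le_card this
  rw [Finset.filter_ne'] at hE
  have := Finset.pred_card_le_card_erase (s := Finset.univ.image p) (a := a)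
  omega

open Classical in
/-- The parity vector of the colors on the neighborhood of `v`. -/
noncomputable def oddVec {V : Type*} [Fintype V] (G : SimpleGraph V) (col : V → Col) (v : V) :
    Col → ZMod 2 :=
  ∑ w ∈ Finset.univ.filter (G.Adj v), ev (col w)

theorem oddColorSet_nonempty_iff {V : Type*} [Fintype V] (G : SimpleGraph V) (col : V → Col)
    (v : V) : (oddColorSet G col v).Nonempty ↔ oddVec G col v ≠ 0 := by
  classical
  have key : ∀ a, a ∈ oddColorSet G col v ↔ oddVec G col v a ≠ 0 := by
    intro a
    have h1 : oddVec G col v a = (({w | w ∈ G.neighborSet v ∧ col w = a}.ncard : ℕ) : ZMod 2) := by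
      rw [Set.ncard_eq_toFinset_card', oddVec, Finset.sum_apply]
      simp only [ev, Pi.single_apply, Finset.sum_boole, Finset.filter_filter]
      congr 2
      ext w
      simp [eq_comm]
    rw [h1, oddColorSet, Set.mem_ofPred_eq, ← Nat.not_even_iff_odd, ne_eq,
      ZMod.natCast_eq_zero_iff_even]
  constructor
  · rintro ⟨a, ha⟩ h0
    exact (key a).mp ha (by rw [h0]; rfl)
  · intro h
    obtain ⟨a, ha⟩ := Function.ne_iff.mp h
    exact ⟨a, (key a).mpr ha⟩

/-- The part of the configuration that the argument uses: a hub `u` with rim `U 0, …, U 5`, where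
`U i` has the outer neighbors `A i`, `B i`, `A (i + 1)`; thus consecutive rim vertices share one
outer neighbor, and other pairs share none. -/
structure Wheel {V : Type*} (G : SimpleGraph V) (u : V) (U A B : Fin 6 → V) : Prop where
  U_inj : Function.Injective U
  A_inj : Function.Injective A
  B_inj : Function.Injective B
  uU : ∀ i, U i ≠ u
  uA : ∀ i, A i ≠ u
  uB : ∀ i, B i ≠ u
  AU : ∀ i j, A i ≠ U j
  BU : ∀ i j, B i ≠ U j
  AB : ∀ i j, A i ≠ B j
  nbr_u : G.neighborSet u = Set.range U
  nbr_U : ∀ i, G.neighborSet (U i) = {U (i - 1), u, U (i + 1), A i, B i, A (i + 1)}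

namespace Wheel
variable {V : Type*} {G : SimpleGraph V} {u : V} {U A B : Fin 6 → V}

theorem adj_u (W : Wheel G u U A B) (w : V) : G.Adj u w ↔ ∃ i, U i = w := by
  rw [← SimpleGraph.mem_neighborSet, W.nbr_u]; rfl

theorem adj_U (W : Wheel G u U A B) (i : Fin 6) (w : V) : G.Adj (U i) w ↔
    w = U (i - 1) ∨ w = u ∨ w = U (i + 1) ∨ w = A i ∨ w = B i ∨ w = A (i + 1) := by
  rw [← SimpleGraph.mem_neighborSet, W.nbr_U]; rfl

theorem outer (W : Wheel G u U A B) {i : Fin 6} {w : V} (h : G.Adj (U i) w) (hu : w ≠ u)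
    (hU : ∀ j, U j ≠ w) : w = A i ∨ w = B i ∨ w = A (i + 1) := by
  rcases (W.adj_U i w).mp h with h | h | h | h
  · exact absurd h.symm (hU _)
  · exact absurd h hu
  · exact absurd h.symm (hU _)
  · exact h

/-- Rim vertices with a common outer neighbor are equal or cyclically adjacent. -/
theorem near (W : Wheel G u U A B) {i j : Fin 6} {w : V} (hi : G.Adj (U i) w)
    (hj : G.Adj (U j) w) (hu : w ≠ u) (hU : ∀ j, U j ≠ w) : j = i ∨ j = i - 1 ∨ j = i + 1 := by
  rcases W.outer hi hu hU with rfl | rfl | rfl <;> rcases W.outer hj hu hU with h | h | h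
  · exact Or.inl (W.A_inj h).symm
  · exact absurd h (W.AB _ _)
  · right; left; rw [W.A_inj h, add_sub_cancel_right]
  · exact absurd h.symm (W.AB _ _)
  · exact Or.inl (W.B_inj h).symm
  · exact absurd h.symm (W.AB _ _)
  · exact Or.inr (Or.inr (W.A_inj h).symm)
  · exact absurd h (W.AB _ _)
  · exact Or.inl (add_right_cancel (W.A_inj h)).symm

theorem oddVec_u [Fintype V] (W : Wheel G u U A B) (col : V → Col) :
    oddVec G col u = total (fun i => col (U i)) := by
  classical
  rw [oddVec, total]
  have : Finset.univ.filter (G.Adj u) = Finset.univ.image U := by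
    ext w; simp [W.adj_u]
  rw [this, Finset.sum_image (fun i _ j _ h => W.U_inj h)]

theorem oddVec_U [Fintype V] (W : Wheel G u U A B) (col : V → Col) (i : Fin 6) :
    oddVec G col (U i) = ev (col (A i)) + ev (col (B i)) + ev (col (A (i + 1))) +
      ev (col (U (i - 1))) + ev (col (U (i + 1))) + ev (col u) := by
  classical
  have : Finset.univ.filter (G.Adj (U i)) =
      {U (i - 1), u, U (i + 1), A i, B i, A (i + 1)} := by
    ext w; simp [W.adj_U]
  have h1 : i - 1 ≠ i + 1 := by clear * -; revert i; decide
  rw [oddVec, this, Finset.sum_insert, Finset.sum_insert, Finset.sum_insert, Finset.sum_insert,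
    Finset.sum_insert, Finset.sum_singleton]
  · abel
  · simpa using (W.AB _ _).symm
  · simp [W.AB, W.A_inj.eq_iff]
  · simp [(W.AU _ _).symm, (W.BU _ _).symm]
  · simp [(W.uU _).symm, (W.uA _).symm, (W.uB _).symm]
  · simp [(W.AU _ _).symm, (W.BU _ _).symm, W.uU, W.U_inj.eq_iff, h1]

open Classical in
/-- The alternative colors for `U i`: those different from its color and from the colors of its five
neighbors other than the hub, such that the recoloring leaves some odd color at each of its outer
neighbors. -/
noncomputable def list [Fintype V] (G : SimpleGraph V) (U A B : Fin 6 → V) (col : V → Col)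
    (i : Fin 6) : Finset Col :=
  Finset.univ.filter fun d => d ≠ col (U i) ∧
    d ∉ Finset.univ.image ![col (U (i - 1)), col (U (i + 1)), col (A i), col (B i), col (A (i + 1))] ∧
    ∀ w, w = A i ∨ w = B i ∨ w = A (i + 1) → oddVec G col w ≠ ev (col (U i)) + ev d

/-- If `U i` forbids a color `a` for the hub, its list has at least two colors: of the nine, one is
its own, at most three occur on its other neighbors, and each of its three outer neighbors excludes
at most one more. -/
theorem two_le_card_list [Fintype V] (G : SimpleGraph V) (U A B : Fin 6 → V) (col : V → Col)
    (i : Fin 6) (a : Col)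
    (h : (ev (col (A i)) + ev (col (B i)) + ev (col (A (i + 1)))) + ev (col (U (i - 1))) +
      ev (col (U (i + 1))) = ev a) :
    2 ≤ (list G U A B col i).card ∧ a ∉ list G U A B col i := by
  classical
  set p : Fin 5 → Col :=
    ![col (U (i - 1)), col (U (i + 1)), col (A i), col (B i), col (A (i + 1))] with hp
  obtain ⟨hP, k, hk⟩ := five_colors p a (by
    rw [← h]
    simp only [total, Fin.sum_univ_five, hp, Matrix.cons_val]
    abel)
  constructor
  · let bad : V → Finset Col := fun w =>
      Finset.univ.filter fun d => oddVec G col w = ev (col (U i)) + ev d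
    have hbad : ∀ w, (bad w).card ≤ 1 := by
      intro w
      rw [Finset.card_le_one]
      intro s hs t ht
      simp only [bad, Finset.mem_filter, Finset.mem_univ, true_and] at hs ht
      exact ev_inj (add_left_cancel (hs.symm.trans ht))
    have hcover : (Finset.univ : Finset Col) ⊆ list G U A B col i ∪ ({col (U i)} ∪
        (Finset.univ.image p ∪ (bad (A i) ∪ (bad (B i) ∪ bad (A (i + 1)))))) := by
      intro d _
      by_contra hd
      simp only [Finset.mem_union, not_or, Finset.mem_singleton] at hd
      obtain ⟨h1, h2, h3, h4, h5, h6⟩ := hd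
      apply h1
      simp only [list, Finset.mem_filter, Finset.mem_univ, true_and]
      refine ⟨h2, h3, ?_⟩
      simp only [bad, Finset.mem_filter, Finset.mem_univ, true_and] at h4 h5 h6
      rintro w (rfl | rfl | rfl) <;> assumption
    have := Finset.card_le_card hcover
    rw [Finset.card_univ, Fintype.card_fin] at this
    have u1 := Finset.card_union_le (list G U A B col i) ({col (U i)} ∪
        (Finset.univ.image p ∪ (bad (A i) ∪ (bad (B i) ∪ bad (A (i + 1))))))
    have u2 := Finset.card_union_le {col (U i)}
        (Finset.univ.image p ∪ (bad (A i) ∪ (bad (B i) ∪ bad (A (i + 1)))))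
    have u3 := Finset.card_union_le (Finset.univ.image p)
      (bad (A i) ∪ (bad (B i) ∪ bad (A (i + 1))))
    have u4 := Finset.card_union_le (bad (A i)) (bad (B i) ∪ bad (A (i + 1)))
    have u5 := Finset.card_union_le (bad (B i)) (bad (A (i + 1)))
    have b1 := hbad (A i)
    have b2 := hbad (B i)
    have b3 := hbad (A (i + 1))
    rw [Finset.card_singleton] at u2
    omega
  · intro ha
    exact (Finset.mem_filter.mp ha).2.2.1 (Finset.mem_image.mpr ⟨k, Finset.mem_univ _, hk⟩)

/-- A proper coloring of `G - u` that is odd at all non-isolated vertices other than the rim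
vertices, and in which the color of `U 0` is unique on the rim, can be modified to an odd
coloring of `G`. The vertices `U i` themselves need
not see an odd color before the modification. -/
theorem extend [Fintype V] (W : Wheel G u U A B) (col : V → Col)
    (hproper : ∀ x y, G.Adj x y → x ≠ u → y ≠ u → col x ≠ col y)
    (hodd : ∀ w, w ≠ u → (∀ i, U i ≠ w) → (G.neighborSet w).Nonempty → oddVec G col w ≠ 0)
    (h0 : ∀ j, j ≠ 0 → col (U j) ≠ col (U 0)) : HasOddNColoring G 9 := by
  classical
  have hu : total (fun i => col (U i)) ≠ 0 := by
    intro h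
    have := congrFun h (col (U 0))
    have hs : (Finset.univ.filter fun i => col (U i) = col (U 0)) = {0} := by
      ext j
      simp only [Finset.mem_filter, Finset.mem_univ, true_and, Finset.mem_singleton]
      constructor
      · intro h; by_contra hj; exact h0 j hj h
      · rintro rfl; rfl
    rw [total_apply, hs] at this
    simp at this
  obtain ⟨c', x, hx, htot, hU, hL⟩ := local_recoloring (fun i => col (U i))
    (fun i => ev (col (A i)) + ev (col (B i)) + ev (col (A (i + 1)))) (list G U A B col) hu
    (fun i h => (Finset.mem_filter.mp h).2.1 rfl) (fun i a h => two_le_card_list G U A B col i a h)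
  obtain ⟨C, Cu, CU, CV⟩ : ∃ C : V → Col, C u = x ∧ (∀ i, C (U i) = c' i) ∧
      ∀ w, w ≠ u → (∀ i, U i ≠ w) → C w = col w := by
    refine ⟨fun w => if w = u then x else if h : ∃ i, U i = w then c' h.choose else col w,
      by simp, ?_, ?_⟩
    · intro i
      have h : ∃ j, U j = U i := ⟨i, rfl⟩
      simp only [W.uU i, if_false, h, dite_true]
      rw [W.U_inj h.choose_spec]
    · intro w hw hU
      have h : ¬ ∃ i, U i = w := by push Not; exact hU
      simp only [hw, if_false, h, dite_false]
  have same : ∀ w, w ≠ u → (∀ i, U i = w → c' i = col (U i)) → C w = col w := by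
    intro w hw h
    by_cases hi : ∃ i, U i = w
    · obtain ⟨i, rfl⟩ := hi; rw [CU, h i rfl]
    · push Not at hi; exact CV w hw hi
  have changed : ∀ i w, c' i ≠ col (U i) → G.Adj (U i) w → w ≠ u → C (U i) ≠ C w := by
    intro i w hi hw hwu
    obtain ⟨hd, hm, hp⟩ := hL i hi
    have hd := (Finset.mem_filter.mp hd).2.2.1
    have hCw : C w = col w := by
      apply same w hwu
      intro j hj
      rcases (W.adj_U i w).mp hw with h | h | h | h | h | h
      · rw [W.U_inj (hj.trans h)]; exact hm
      · exact absurd h hwu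
      · rw [W.U_inj (hj.trans h)]; exact hp
      · exact absurd (hj.trans h).symm (W.AU _ _)
      · exact absurd (hj.trans h).symm (W.BU _ _)
      · exact absurd (hj.trans h).symm (W.AU _ _)
    rw [CU, hCw]
    intro e
    apply hd
    rw [e, Finset.mem_image]
    rcases (W.adj_U i w).mp hw with h | h | h | h | h | h
    · exact ⟨0, Finset.mem_univ _, by rw [h]; rfl⟩
    · exact absurd h hwu
    · exact ⟨1, Finset.mem_univ _, by rw [h]; rfl⟩
    · exact ⟨2, Finset.mem_univ _, by rw [h]; rfl⟩
    · exact ⟨3, Finset.mem_univ _, by rw [h]; rfl⟩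
    · exact ⟨4, Finset.mem_univ _, by rw [h]; rfl⟩
  refine ⟨C, ?_, ?_⟩
  · intro s t hst
    by_cases hs : s = u
    · subst hs
      obtain ⟨i, rfl⟩ := (W.adj_u t).mp hst
      rw [Cu, CU]; exact (hx i).symm
    by_cases ht : t = u
    · subst ht
      obtain ⟨i, rfl⟩ := (W.adj_u s).mp hst.symm
      rw [Cu, CU]; exact hx i
    by_cases h1 : ∃ i, U i = s ∧ c' i ≠ col (U i)
    · obtain ⟨i, rfl, hi⟩ := h1
      exact changed i t hi hst ht
    by_cases h2 : ∃ i, U i = t ∧ c' i ≠ col (U i)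
    · obtain ⟨i, rfl, hi⟩ := h2
      exact (changed i s hi hst.symm hs).symm
    push Not at h1 h2
    rw [same s hs h1, same t ht h2]
    exact hproper s t hst hs ht
  · intro w hw
    rw [oddColorSet_nonempty_iff]
    by_cases hwu : w = u
    · subst hwu
      rw [W.oddVec_u]
      simpa only [CU] using htot
    by_cases hwU : ∃ i, U i = w
    · obtain ⟨i, rfl⟩ := hwU
      rw [W.oddVec_U, CU, CU, Cu, CV _ (W.uA _) (fun j => (W.AU _ j).symm),
        CV _ (W.uB _) (fun j => (W.BU _ j).symm), CV _ (W.uA _) (fun j => (W.AU _ j).symm)]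
      exact hU i
    push Not at hwU
    have hnu : ∀ y, G.Adj w y → y ≠ u := by
      rintro y hy rfl
      obtain ⟨i, hi⟩ := (W.adj_u w).mp hy.symm
      exact hwU i hi
    by_cases hch : ∃ i, G.Adj (U i) w ∧ c' i ≠ col (U i)
    · obtain ⟨i, hadj, hi⟩ := hch
      obtain ⟨hd, hm, hp⟩ := hL i hi
      have hd := (Finset.mem_filter.mp hd).2.2.2 w (W.outer hadj hwu hwU)
      have hmem : U i ∈ Finset.univ.filter (G.Adj w) := by simpa using hadj.symm
      have hsum : oddVec G C w = oddVec G col w + (ev (col (U i)) + ev (c' i)) := by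
        simp only [oddVec]
        rw [← Finset.add_sum_erase _ _ hmem,
          ← Finset.add_sum_erase _ (fun y => ev (col y)) hmem]
        have : ∑ y ∈ (Finset.univ.filter (G.Adj w)).erase (U i), ev (C y)
            = ∑ y ∈ (Finset.univ.filter (G.Adj w)).erase (U i), ev (col y) := by
          refine Finset.sum_congr rfl fun y hy => ?_
          obtain ⟨hyi, hy⟩ := Finset.mem_erase.mp hy
          have hy : G.Adj w y := by simpa using hy
          rw [same y (hnu y hy)]
          rintro j rfl
          rcases W.near hadj hy.symm hwu hwU with rfl | rfl | rfl
          · exact absurd rfl hyi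
          · exact hm
          · exact hp
        rw [this, CU]
        linear_combination -ev_add_self (col (U i))
      intro h
      rw [hsum] at h
      apply hd
      rw [← sub_eq_zero, CharTwo.sub_eq_add]
      exact h
    · push Not at hch
      have : oddVec G C w = oddVec G col w := by
        refine Finset.sum_congr rfl fun y hy => ?_
        have hy : G.Adj w y := by simpa using hy
        rw [same y (hnu y hy)]
        rintro j rfl
        exact hch j hy.symm
      rw [this]
      exact hodd w hwu hwU hw

end Wheel

/-- The outer cycle is indexed so that `A i` is the outer vertex shared by `U (i - 1)` and `U i`. -/
theorem Fig1Config.wheel {V : Type*} {G : SimpleGraph V}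
    {u u1 u2 u3 u4 u5 u6 v1 v2 v3 v4 v5 v6 v7 v8 v9 v10 v11 v12 : V}
    (h : Fig1Config G u u1 u2 u3 u4 u5 u6 v1 v2 v3 v4 v5 v6 v7 v8 v9 v10 v11 v12) :
    Wheel G u ![u1, u2, u3, u4, u5, u6] ![v12, v2, v4, v6, v8, v10]
      ![v1, v3, v5, v7, v9, v11] := by
  obtain ⟨hnd, hu, h1, h2, h3, h4, h5, h6, -, -⟩ := h
  let t : Fin 19 → V := [u, u1, u2, u3, u4, u5, u6, v1, v2, v3, v4, v5, v6,
    v7, v8, v9, v10, v11, v12].get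
  have hinj : Function.Injective t := List.nodup_iff_injective_get.mp hnd
  let sU : Fin 6 → Fin 19 := ![1, 2, 3, 4, 5, 6]
  let sA : Fin 6 → Fin 19 := ![18, 8, 10, 12, 14, 16]
  let sB : Fin 6 → Fin 19 := ![7, 9, 11, 13, 15, 17]
  have eu : u = t 0 := rfl
  have eU : ∀ i, ![u1, u2, u3, u4, u5, u6] i = t (sU i) := by intro i; fin_cases i <;> rfl
  have eA : ∀ i, ![v12, v2, v4, v6, v8, v10] i = t (sA i) := by intro i; fin_cases i <;> rfl
  have eB : ∀ i, ![v1, v3, v5, v7, v9, v11] i = t (sB i) := by intro i; fin_cases i <;> rfl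
  have hne : ∀ {a b : Fin 19}, a ≠ b → t a ≠ t b := fun hab e => hab (hinj e)
  constructor
  · intro i j e
    rw [eU, eU] at e
    have := hinj e
    revert this; clear * -; revert i j; decide
  · intro i j e
    rw [eA, eA] at e
    have := hinj e
    revert this; clear * -; revert i j; decide
  · intro i j e
    rw [eB, eB] at e
    have := hinj e
    revert this; clear * -; revert i j; decide
  · intro i; rw [eU, eu]; exact hne (by clear * -; revert i; decide)
  · intro i; rw [eA, eu]; exact hne (by clear * -; revert i; decide)
  · intro i; rw [eB, eu]; exact hne (by clear * -; revert i; decide)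
  · intro i j; rw [eA, eU]; exact hne (by clear * -; revert i j; decide)
  · intro i j; rw [eB, eU]; exact hne (by clear * -; revert i j; decide)
  · intro i j; rw [eA, eB]; exact hne (by clear * -; revert i j; decide)
  · rw [hu]; ext w; simp [Matrix.range_cons]; tauto
  · intro i
    fin_cases i
    exacts [h1, h2, h3, h4, h5, h6]

theorem lemma8_reduction {V : Type*} [Fintype V] (G : SimpleGraph V)
    (u u1 u2 u3 u4 u5 u6 v1 v2 v3 v4 v5 v6 v7 v8 v9 v10 v11 v12 : V)
    (hfig : Fig1Config G u u1 u2 u3 u4 u5 u6 v1 v2 v3 v4 v5 v6 v7 v8 v9 v10 v11 v12)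
    (h9 : HasOddNColoring (fig1ReducedGraph G u u1 u3 u4 u5) 9) :
    HasOddNColoring G 9 := by
  classical
  have W := hfig.wheel
  obtain ⟨c, hproper, hodd⟩ := h9
  let col : V → Col := fun w => if h : w = u then 0 else c (Sum.inl ⟨w, h⟩)
  have hcol : ∀ w (h : w ≠ u), col w = c (Sum.inl ⟨w, h⟩) := fun w h => by simp [col, h]
  have adj_inl : ∀ a b, (fig1ReducedGraph G u u1 u3 u4 u5).Adj (Sum.inl a) (Sum.inl b) ↔
      G.Adj a b := by
    intro a b
    simp only [fig1ReducedGraph, SimpleGraph.fromRel_adj]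
    constructor
    · rintro ⟨-, h | h⟩
      exacts [h, h.symm]
    · intro h
      exact ⟨fun e => h.ne (by rw [Sum.inl.inj e]), Or.inl h⟩
  have adj_inr : ∀ a i, (fig1ReducedGraph G u u1 u3 u4 u5).Adj (Sum.inr i) (Sum.inl a) ↔
      (i = 0 ∧ ((a : V) = u1 ∨ (a : V) = u3)) ∨
        (i = 1 ∧ ((a : V) = u1 ∨ (a : V) = u4)) ∨
        (i = 2 ∧ ((a : V) = u1 ∨ (a : V) = u5)) := by
    intro a i
    simp [fig1ReducedGraph, SimpleGraph.fromRel_adj]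
  have adj_rr : ∀ i j, ¬ (fig1ReducedGraph G u u1 u3 u4 u5).Adj (Sum.inr i) (Sum.inr j) := by
    intro i j
    simp [fig1ReducedGraph, SimpleGraph.fromRel_adj]
  have hprop : ∀ x y, G.Adj x y → x ≠ u → y ≠ u → col x ≠ col y := by
    intro x y h hx hy
    rw [hcol x hx, hcol y hy]
    exact hproper ((adj_inl _ _).mpr h)
  -- a vertex of degree two whose neighbors agree sees no color an odd number of times
  have two : ∀ (i : Fin 3) (t : V) (h1 : u1 ≠ u) (ht : t ≠ u), t ≠ u1 →
      (∀ a, (fig1ReducedGraph G u u1 u3 u4 u5).Adj (Sum.inr i) (Sum.inl a) ↔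
        (a : V) = u1 ∨ (a : V) = t) → col t ≠ col u1 := by
    intro i t h1 ht htu hadj e
    rw [hcol t ht, hcol u1 h1] at e
    have h := hodd (Sum.inr i) ⟨Sum.inl ⟨u1, h1⟩, (hadj _).mpr (Or.inl rfl)⟩
    rw [oddColorSet_nonempty_iff] at h
    apply h
    have hs : Finset.univ.filter ((fig1ReducedGraph G u u1 u3 u4 u5).Adj (Sum.inr i)) =
        {Sum.inl ⟨u1, h1⟩, Sum.inl ⟨t, ht⟩} := by
      ext y
      rcases y with a | j
      · simp [hadj, Subtype.ext_iff]
      · simp [adj_rr]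
    rw [oddVec, hs, Finset.sum_pair (by simpa [Subtype.ext_iff] using htu.symm), e, ev_add_self]
  have hu1 : u1 ≠ u := W.uU 0
  have hu3 : u3 ≠ u := W.uU 2
  have hu4 : u4 ≠ u := W.uU 3
  have hu5 : u5 ≠ u := W.uU 4
  refine W.extend col hprop ?_ ?_
  · intro w hw hwU hne
    rw [← oddColorSet_nonempty_iff]
    have hsub : ∀ y, (fig1ReducedGraph G u u1 u3 u4 u5).Adj (Sum.inl ⟨w, hw⟩) y ↔
        ∃ b : ({u}ᶜ : Set V), y = Sum.inl b ∧ G.Adj w b := by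
      intro y
      rcases y with b | j
      · rw [adj_inl]; simp
      · rw [SimpleGraph.adj_comm, adj_inr]
        have n1 : w ≠ u1 := (hwU 0).symm
        have n3 : w ≠ u3 := (hwU 2).symm
        have n4 : w ≠ u4 := (hwU 3).symm
        have n5 : w ≠ u5 := (hwU 4).symm
        simp [n1, n3, n4, n5]
    have hnu : ∀ y, G.Adj w y → y ≠ u := by
      rintro y hy rfl
      obtain ⟨i, hi⟩ := (W.adj_u w).mp hy.symm
      exact hwU i hi
    obtain ⟨y, hy⟩ := hne
    obtain ⟨a, ha⟩ := hodd (Sum.inl ⟨w, hw⟩)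
      ⟨Sum.inl ⟨y, hnu y hy⟩, (hsub _).mpr ⟨_, rfl, hy⟩⟩
    refine ⟨a, ?_⟩
    have himg : {y | y ∈ G.neighborSet w ∧ col y = a} = Sum.elim Subtype.val (fun _ => u) ''
        {y | y ∈ (fig1ReducedGraph G u u1 u3 u4 u5).neighborSet (Sum.inl ⟨w, hw⟩) ∧ c y = a} := by
      ext y
      simp only [Set.mem_ofPred_eq, SimpleGraph.mem_neighborSet, Set.mem_image, hsub]
      constructor
      · rintro ⟨hy, rfl⟩
        exact ⟨Sum.inl ⟨y, hnu y hy⟩, ⟨⟨_, rfl, hy⟩, (hcol y (hnu y hy)).symm⟩, rfl⟩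
      · rintro ⟨_, ⟨⟨b, rfl, hb⟩, rfl⟩, rfl⟩
        exact ⟨hb, hcol _ b.2⟩
    rw [oddColorSet, Set.mem_ofPred_eq, himg, Set.InjOn.ncard_image]
    · exact ha
    · rintro _ ⟨h, -⟩ _ ⟨h', -⟩ e
      obtain ⟨b, rfl, -⟩ := (hsub _).mp h
      obtain ⟨b', rfl, -⟩ := (hsub _).mp h'
      exact congrArg Sum.inl (Subtype.ext e)
  · have ne : ∀ {i j : Fin 6}, i ≠ j →
        ![u1, u2, u3, u4, u5, u6] i ≠ ![u1, u2, u3, u4, u5, u6] j :=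
      fun hij e => hij (W.U_inj e)
    intro j hj
    fin_cases j
    · exact absurd rfl hj
    · exact hprop u2 u1 ((W.adj_U 1 u1).mpr (Or.inl rfl)) (W.uU 1) hu1
    · exact two 0 u3 hu1 hu3 (ne (i := 2) (j := 0) (by decide)) (fun a => by simp [adj_inr])
    · exact two 1 u4 hu1 hu4 (ne (i := 3) (j := 0) (by decide)) (fun a => by simp [adj_inr])
    · exact two 2 u5 hu1 hu5 (ne (i := 4) (j := 0) (by decide)) (fun a => by simp [adj_inr])
    · exact hprop u6 u1 ((W.adj_U 5 u1).mpr (Or.inr (Or.inr (Or.inl rfl)))) (W.uU 5) hu1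
end
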